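/- arXiv:1812.00247 — 3 statements merged into one kernel-verified Lean document; each statement's English description precedes it below -/
import Mathlib

section
/- Let L be an n-dimensional nilpotent Lie algebra over a field with derived subalgebra of dimension m ≥ 1 and nilpotency class c. Then the dimension of the Schur multiplier M(L) satisfies dim M(L) ≤ (1/2)(n−m−1)(n+m) − Σ_{i=2}^{min(n−m,c)} (n−m−i). -/
open Module

/-- The dimension of the Schur multiplier `M(L) = (R ∩ F²)/[R,F]` of a Lie algebra `L`,
computed from a free presentation `π : FreeLieAlgebra K X → L` (with `R = ker π` and
`F² = [F,F]`). -/
noncomputable def lieSchurMultiplierDim (K : Type) [Field K] (X : Type) {L : Type}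
    [LieRing L] [LieAlgebra K L] (π : FreeLieAlgebra K X →ₗ⁅K⁆ L) : ℕ :=
  let F := FreeLieAlgebra K X
  let R : LieIdeal K F := π.ker
  let F2 : LieIdeal K F := LieModule.lowerCentralSeries K F F 1
  Module.finrank K
    (↥((R ⊓ F2 : LieIdeal K F) : Submodule K F) ⧸
      (Submodule.comap ((R ⊓ F2 : LieIdeal K F) : Submodule K F).subtype
        ((⁅R, (⊤ : LieIdeal K F)⁆ : LieIdeal K F) : Submodule K F)))

/-- `L` is nilpotent of nilpotency class exactly `c`: in the paper's notation
`γ_{c+1}(L) = 0` and `γ_k(L) ≠ 0` for `k ≤ c` (Mathlib's `lowerCentralSeries` is indexed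
so that `γ_{k+1}(L) = lowerCentralSeries K L L k`). -/
def lieNilpotencyClass (K : Type) [Field K] (L : Type) [LieRing L] [LieAlgebra K L]
    (c : ℕ) : Prop :=
  LieModule.lowerCentralSeries K L L c = ⊥ ∧
    ∀ k < c, LieModule.lowerCentralSeries K L L k ≠ ⊥

/-- The dimension of the derived subalgebra `L² = [L,L]`. -/
noncomputable def lieDerivedDim (K : Type) [Field K] (L : Type) [LieRing L]
    [LieAlgebra K L] : ℕ :=
  Module.finrank K
    ↥((LieModule.lowerCentralSeries K L L 1 : LieSubmodule K L L) : Submodule K L)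

/-- Rai's upper bound `(1/2)(n−m−1)(n+m) − Σ_{i=2}^{min(n−m,c)} (n−m−i)`. -/
def raiBound (n m c : ℕ) : ℤ :=
  ((n : ℤ) - m - 1) * ((n : ℤ) + m) / 2
    - ∑ i ∈ Finset.Icc 2 (min (n - m) c), ((n : ℤ) - m - (i : ℤ))

/-!
Let `R = ker π`. In the central extension `p : G = F/[R, F] → L` the multiplier `(R ∩ F²)/[R, F]`
is the kernel of `γ₂(G) → γ₂(L)`, so its dimension is `dim γ₂(G) - m`, and `γ₂(G)` is bounded layer
by layer. Let `B ⊆ G` be a lift of a complement of `L²` in `L` and `d = n - m` its dimension. As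
`ker p` is central, `γ₂(G)/γ₃(G)` is spanned by the `d.choose 2` brackets of a basis of `B`, and
`γᵢ₊₁(G)/γᵢ₊₂(G)` by the brackets of a lift `A` of `γᵢ(L)/γᵢ₊₁(L)` with `B`, which gives
`d * dim (γᵢ(L)/γᵢ₊₁(L))`. For `2 ≤ i ≤ c` one basis vector of `A` can be chosen to be a left-normed
bracket `w` of `i` elements of `B`. By the Jacobi identity each `⁅w, b⁆` is a sum of brackets of
`γᵢ(G)` with the entries of `w`, so `w` needs to be paired only with these entries, which saves
`d - i` dimensions. Since `γ_{c+2}(G) = 0`, summing over `i` yields the bound.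
-/

namespace RaiBound

section LinearAlgebra

variable {K E E' E'' : Type*} [Field K] [AddCommGroup E] [Module K E] [AddCommGroup E']
  [Module K E'] [AddCommGroup E''] [Module K E'']

instance finiteDimensional_map₂ (f : E →ₗ[K] E' →ₗ[K] E'') (A : Submodule K E)
    (B : Submodule K E') [FiniteDimensional K A] [FiniteDimensional K B] :
    FiniteDimensional K (Submodule.map₂ f A B) := by
  rw [TensorProduct.map₂_eq_range_lift_comp_mapIncl]
  infer_instance

lemma finrank_map₂_le (f : E →ₗ[K] E' →ₗ[K] E'') (A : Submodule K E) (B : Submodule K E')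
    [FiniteDimensional K A] [FiniteDimensional K B] :
    finrank K (Submodule.map₂ f A B) ≤ finrank K A * finrank K B := by
  rw [TensorProduct.map₂_eq_range_lift_comp_mapIncl, ← finrank_tensorProduct (R := K)]
  exact LinearMap.finrank_range_le _

lemma finrank_map₂_sup_span_singleton_sup_map₂_le (f : E →ₗ[K] E' →ₗ[K] E'') (A : Submodule K E)
    (w : E) (S T : Submodule K E') [FiniteDimensional K A] [FiniteDimensional K S]
    [FiniteDimensional K T] :
    finrank K ↥(Submodule.map₂ f (A ⊔ Submodule.span K {w}) S ⊔ Submodule.map₂ f A T) ≤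
      finrank K A * (finrank K S + finrank K T) + finrank K S := by
  have finrank_sup_le : finrank K ↥(A ⊔ Submodule.span K {w}) ≤ finrank K A + 1 :=
    (Submodule.finrank_add_le_finrank_add_finrank _ _).trans
      (Nat.add_le_add_left ((finrank_span_le_card {w}).trans (by simp)) _)
  calc finrank K ↥(Submodule.map₂ f (A ⊔ Submodule.span K {w}) S ⊔ Submodule.map₂ f A T)
      ≤ finrank K (Submodule.map₂ f (A ⊔ Submodule.span K {w}) S) +
          finrank K (Submodule.map₂ f A T) := Submodule.finrank_add_le_finrank_add_finrank _ _
    _ ≤ (finrank K A + 1) * finrank K S + finrank K A * finrank K T :=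
        add_le_add ((finrank_map₂_le _ _ _).trans (Nat.mul_le_mul_right _ finrank_sup_le))
          (finrank_map₂_le _ _ _)
    _ = finrank K A * (finrank K S + finrank K T) + finrank K S := by ring

lemma finrank_map₂_self_le_choose_two (f : E →ₗ[K] E →ₗ[K] E') (hf : f.IsAlt)
    (A : Submodule K E) [FiniteDimensional K A] :
    finrank K (Submodule.map₂ f A A) ≤ (finrank K A).choose 2 := by
  let g : A [⋀^Fin 2]→ₗ[K] E' :=
    { toFun v := f (v 0) (v 1)
      map_update_add' v i x y := by fin_cases i <;> simp
      map_update_smul' v i a x := by fin_cases i <;> simp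
      map_eq_zero_of_eq' v i j hv hij := by
        fin_cases i <;> fin_cases j <;> simp_all [hf.self_eq_zero] }
  have map₂_le_range : Submodule.map₂ f A A ≤
      LinearMap.range (exteriorPower.alternatingMapLinearEquiv g) :=
    Submodule.map₂_le.2 fun x hx y hy ↦
      ⟨exteriorPower.ιMulti K 2 ![⟨x, hx⟩, ⟨y, hy⟩],
        exteriorPower.alternatingMapLinearEquiv_apply_ιMulti _ _⟩
  calc finrank K (Submodule.map₂ f A A)
      ≤ finrank K (LinearMap.range (exteriorPower.alternatingMapLinearEquiv g)) :=
        Submodule.finrank_mono map₂_le_range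
    _ ≤ finrank K (⋀[K]^2 A) := LinearMap.finrank_range_le _
    _ = (finrank K A).choose 2 := exteriorPower.finrank_eq K 2

lemma exists_sup_eq_finrank_add_eq {W V : Submodule K E} [FiniteDimensional K V] (hWV : W ≤ V) :
    ∃ C ≤ V, W ⊔ C = V ∧ finrank K W + finrank K C = finrank K V := by
  obtain ⟨C, hdisj, hsup⟩ := IsModularLattice.exists_disjoint_and_sup_eq hWV
  have hCV : C ≤ V := le_sup_right.trans_eq hsup
  have := Submodule.finiteDimensional_of_le hWV
  have := Submodule.finiteDimensional_of_le hCV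
  refine ⟨C, hCV, hsup, ?_⟩
  rw [← hsup, ← Submodule.finrank_sup_add_finrank_inf_eq, hdisj.eq_bot, finrank_bot, add_zero]

lemma exists_le_map_eq_finrank_eq (f : E →ₗ[K] E') {V : Submodule K E} {C : Submodule K E'}
    [FiniteDimensional K C] (hC : C ≤ V.map f) :
    ∃ A ≤ V, FiniteDimensional K A ∧ A.map f = C ∧ finrank K A = finrank K C := by
  obtain ⟨s, hs⟩ := (f.submoduleMap V).exists_rightInverse_of_surjective
    (LinearMap.range_eq_top.2 (f.submoduleMap_surjective V))
  let lift : C →ₗ[K] E := V.subtype ∘ₗ s ∘ₗ Submodule.inclusion hC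
  have f_comp_lift : f ∘ₗ lift = C.subtype := by
    ext c
    exact congrArg Subtype.val (LinearMap.congr_fun hs (Submodule.inclusion hC c))
  have lift_injective : Function.Injective lift := by
    refine .of_comp (f := f) ?_
    rw [← LinearMap.coe_comp, f_comp_lift]
    exact C.subtype_injective
  refine ⟨LinearMap.range lift, ?_, inferInstance, ?_,
    LinearMap.finrank_range_of_inj lift_injective⟩
  · rintro _ ⟨c, rfl⟩
    exact (s _).2
  · rw [← LinearMap.range_comp, f_comp_lift, Submodule.range_subtype]

lemma finrank_map_add_finrank_inf_ker (f : E →ₗ[K] E') (V : Submodule K E)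
    [FiniteDimensional K V] :
    finrank K (V.map f) + finrank K ↥(V ⊓ LinearMap.ker f) = finrank K V := by
  have finrank_ker : finrank K (LinearMap.ker (f.domRestrict V)) =
      finrank K ↥(V ⊓ LinearMap.ker f) := by
    rw [← (Submodule.comapSubtypeEquivOfLe inf_le_left).finrank_eq, LinearMap.ker_domRestrict,
      Submodule.comap_inf, Submodule.comap_subtype_self, top_inf_eq]
  rw [← finrank_ker, ← LinearMap.range_domRestrict, LinearMap.finrank_range_add_finrank_ker]

lemma finrank_span_list_le (l : List E) : finrank K (Submodule.span K {x | x ∈ l}) ≤ l.length := by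
  classical
  rw [← List.coe_toFinset]
  exact (finrank_span_finset_le_card l.toFinset).trans l.toFinset_card_le

/-- `dim U / (U ∩ V) ≤ r`, expressed without quotients: `U` is spanned modulo `V` by a subspace of
dimension at most `r`. -/
def RelFinrankLE (U V : Submodule K E) (r : ℕ) : Prop :=
  ∃ D : Submodule K E, FiniteDimensional K D ∧ finrank K D ≤ r ∧ U ≤ D ⊔ V

namespace RelFinrankLE

variable {U V W : Submodule K E} {r s : ℕ}

lemma trans (hUV : RelFinrankLE U V r) (hVW : RelFinrankLE V W s) : RelFinrankLE U W (r + s) := by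
  obtain ⟨D, _, hDr, hUD⟩ := hUV
  obtain ⟨D', _, hDs, hVD⟩ := hVW
  refine ⟨D ⊔ D', inferInstance, ?_, ?_⟩
  · exact (Submodule.finrank_add_le_finrank_add_finrank D D').trans (add_le_add hDr hDs)
  · rw [sup_assoc]
    exact hUD.trans (sup_le_sup_left hVD D)

lemma finiteDimensional (h : RelFinrankLE U ⊥ r) : FiniteDimensional K U := by
  obtain ⟨D, _, -, hUD⟩ := h
  exact Submodule.finiteDimensional_of_le (by simpa using hUD)

lemma finrank_le (h : RelFinrankLE U ⊥ r) : finrank K U ≤ r := by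
  obtain ⟨D, _, hDr, hUD⟩ := h
  exact (Submodule.finrank_mono (by simpa using hUD)).trans hDr

end RelFinrankLE
end LinearAlgebra

section CommRing

variable {R G L : Type*} [CommRing R] [LieRing G] [LieAlgebra R G] [LieRing L] [LieAlgebra R L]

/-- The term of index `i` of the lower central series of `L`, as a submodule. The indexing starts at
`0`, so `γ R L i` is `γ_{i+1}(L)` in the usual indexing. -/
abbrev γ (R L : Type*) [CommRing R] [LieRing L] [LieAlgebra R L] (i : ℕ) : Submodule R L :=
  (LieModule.lowerCentralSeries R L L i).toSubmodule

/-- The Lie bracket as a bilinear map, so that `Submodule.map₂` applies to it. -/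
def lieBilin (R G : Type*) [CommRing R] [LieRing G] [LieAlgebra R G] : G →ₗ[R] G →ₗ[R] G :=
  LinearMap.mk₂ R (⁅·, ·⁆) add_lie smul_lie lie_add (fun _ _ _ ↦ lie_smul _ _ _)

@[simp]
lemma lieBilin_apply (x y : G) : lieBilin R G x y = ⁅x, y⁆ := rfl

/-- The submodule spanned by the brackets `⁅a, b⁆` with `a ∈ A` and `b ∈ B`, for submodules `A` and
`B` of a Lie algebra that need not be ideals. -/
abbrev bracket (A B : Submodule R G) : Submodule R G :=
  Submodule.map₂ (lieBilin R G) A B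

lemma lie_mem_bracket {A B : Submodule R G} {a b : G} (ha : a ∈ A) (hb : b ∈ B) :
    ⁅a, b⁆ ∈ bracket A B :=
  Submodule.apply_mem_map₂ (lieBilin R G) ha hb

lemma bracket_mono {A A' B B' : Submodule R G} (hA : A ≤ A') (hB : B ≤ B') :
    bracket A B ≤ bracket A' B' :=
  Submodule.map₂_le_map₂ hA hB

lemma bracket_sup_left (A A' B : Submodule R G) :
    bracket (A ⊔ A') B = bracket A B ⊔ bracket A' B :=
  Submodule.map₂_sup_left (lieBilin R G) A A' B

lemma bracket_sup_right (A B B' : Submodule R G) :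
    bracket A (B ⊔ B') = bracket A B ⊔ bracket A B' :=
  Submodule.map₂_sup_right (lieBilin R G) A B B'

lemma bracket_comm (A B : Submodule R G) : bracket A B = bracket B A := by
  have bracket_le (A B : Submodule R G) : bracket A B ≤ bracket B A :=
    Submodule.map₂_le.2 fun a ha b hb ↦ by
      simpa using neg_mem (lie_mem_bracket hb ha)
  exact le_antisymm (bracket_le A B) (bracket_le B A)

lemma bracket_eq_bot_of_le_center (A : Submodule R G) {Z : LieIdeal R G}
    (hZ : Z ≤ LieAlgebra.center R G) : bracket A Z.toSubmodule = ⊥ :=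
  eq_bot_iff.2 (Submodule.map₂_le.2 fun a _ _ hz ↦ hZ hz a)

lemma lowerCentralSeries_succ_eq_bracket (i : ℕ) : γ R G (i + 1) = bracket (γ R G i) ⊤ := by
  rw [bracket_comm, γ, LieModule.lowerCentralSeries_succ,
    LieSubmodule.lieIdeal_oper_eq_linear_span', bracket, Submodule.map₂_eq_span_image2]
  rfl

lemma lie_mem_lowerCentralSeries_succ {i : ℕ} {x : G} (hx : x ∈ γ R G i) (y : G) :
    ⁅x, y⁆ ∈ γ R G (i + 1) := by
  rw [lowerCentralSeries_succ_eq_bracket]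
  exact lie_mem_bracket hx Submodule.mem_top

lemma lie_mem_lowerCentralSeries_succ' {i : ℕ} {x : G} (hx : x ∈ γ R G i) (y : G) :
    ⁅y, x⁆ ∈ γ R G (i + 1) := by
  rw [γ, LieModule.lowerCentralSeries_succ]
  exact LieSubmodule.lie_mem_lie (LieSubmodule.mem_top y) hx

lemma bracket_lowerCentralSeries_le (i j : ℕ) :
    bracket (γ R G i) (γ R G j) ≤ γ R G (i + j + 1) := by
  induction j generalizing i with
  | zero =>
    rw [add_zero, lowerCentralSeries_succ_eq_bracket]
    exact bracket_mono le_rfl le_top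
  | succ j ih =>
    refine Submodule.map₂_le.2 fun x hx ↦ ?_
    suffices γ R G (j + 1) ≤ (γ R G (i + (j + 1) + 1)).comap (lieBilin R G x) from this
    conv_lhs => rw [lowerCentralSeries_succ_eq_bracket]
    refine Submodule.map₂_le.2 fun y hy z _ ↦ ?_
    simp only [lieBilin_apply, Submodule.mem_comap, leibniz_lie x y z]
    have hxz : ⁅x, z⁆ ∈ γ R G (i + 1) := lie_mem_lowerCentralSeries_succ hx z
    have hyxz := ih (i + 1) (lie_mem_bracket hxz hy)
    rw [← lie_skew y, show i + (j + 1) + 1 = i + 1 + j + 1 by ring]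
    refine add_mem ?_ (neg_mem hyxz)
    rw [show i + 1 + j + 1 = i + j + 1 + 1 by ring]
    exact lie_mem_lowerCentralSeries_succ (ih i (lie_mem_bracket hx hy)) z

lemma map_lowerCentralSeries_of_surjective {p : G →ₗ⁅R⁆ L} (hp : Function.Surjective p) (i : ℕ) :
    (γ R G i).map (p : G →ₗ[R] L) = γ R L i := by
  rw [γ, γ, ← LieIdeal.lowerCentralSeries_map_eq i hp, LieIdeal.coe_map_of_surjective hp]

lemma lowerCentralSeries_succ_eq_bot_of_ker_le_center {p : G →ₗ⁅R⁆ L}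
    (hp : Function.Surjective p) (hker : p.ker ≤ LieAlgebra.center R G) {i : ℕ}
    (hi : LieModule.lowerCentralSeries R L L i = ⊥) : γ R G (i + 1) = ⊥ := by
  have le_ker : LieModule.lowerCentralSeries R G G i ≤ p.ker := by
    rw [← LieSubmodule.toSubmodule_le_toSubmodule, LieHom.ker_toSubmodule, LinearMap.le_ker_iff_map,
      map_lowerCentralSeries_of_surjective hp, γ, hi, LieSubmodule.bot_toSubmodule]
  rw [lowerCentralSeries_succ_eq_bracket, bracket_comm]
  exact bracket_eq_bot_of_le_center ⊤ (le_ker.trans hker)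

lemma bracket_lowerCentralSeries_le_sup_left {A : Submodule R G} {Z : LieIdeal R G}
    (hZ : Z ≤ LieAlgebra.center R G) {i : ℕ} (hA : γ R G i ≤ A ⊔ γ R G (i + 1) ⊔ Z.toSubmodule)
    (B : Submodule R G) : bracket (γ R G i) B ≤ bracket A B ⊔ γ R G (i + 2) := by
  refine (bracket_mono hA le_rfl).trans ?_
  rw [bracket_sup_left, bracket_sup_left, bracket_comm Z.toSubmodule,
    bracket_eq_bot_of_le_center _ hZ, sup_bot_eq, lowerCentralSeries_succ_eq_bracket (i + 1)]
  exact sup_le_sup_left (bracket_mono le_rfl le_top) _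

lemma lowerCentralSeries_succ_le_bracket_sup {B : Submodule R G} {Z : LieIdeal R G}
    (hZ : Z ≤ LieAlgebra.center R G) (hB : ⊤ ≤ B ⊔ γ R G 1 ⊔ Z.toSubmodule) (i : ℕ) :
    γ R G (i + 1) ≤ bracket (γ R G i) B ⊔ γ R G (i + 2) := by
  conv_lhs => rw [lowerCentralSeries_succ_eq_bracket]
  refine (bracket_mono le_rfl hB).trans ?_
  rw [bracket_sup_right, bracket_sup_right, bracket_eq_bot_of_le_center _ hZ,
    sup_bot_eq]
  exact sup_le_sup_left (bracket_lowerCentralSeries_le i 1) _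

/-- The left-normed bracket `⁅…⁅⁅x, y₁⁆, y₂⁆, …, yₖ⁆` of weight `k + 1`, with `l = [y₁, …, yₖ]`. -/
def leftNormedBracket (x : G) (l : List G) : G :=
  l.foldl (⁅·, ·⁆) x

@[simp]
lemma leftNormedBracket_nil (x : G) : leftNormedBracket x [] = x := rfl

@[simp]
lemma leftNormedBracket_append_singleton (x : G) (l : List G) (y : G) :
    leftNormedBracket x (l ++ [y]) = ⁅leftNormedBracket x l, y⁆ := by
  simp [leftNormedBracket]

lemma map_leftNormedBracket (p : G →ₗ⁅R⁆ L) (x : G) (l : List G) :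
    p (leftNormedBracket x l) = leftNormedBracket (p x) (l.map p) := by
  induction l using List.reverseRecOn with
  | nil => rfl
  | append_singleton l y ih => simp [ih]

lemma leftNormedBracket_mem_lowerCentralSeries (x : G) (l : List G) :
    leftNormedBracket x l ∈ γ R G l.length := by
  induction l using List.reverseRecOn with
  | nil => simp
  | append_singleton l y ih =>
    rw [leftNormedBracket_append_singleton, List.length_append]
    exact lie_mem_lowerCentralSeries_succ ih y

/-- By the Jacobi identity, each entry of a left-normed bracket can be moved to the outermost
position. -/
lemma lie_leftNormedBracket_mem_bracket (x : G) (l : List G) {k : ℕ} {z : G}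
    (hz : z ∈ γ R G k) :
    ⁅leftNormedBracket x l, z⁆ ∈
      bracket (γ R G (l.length + k)) (Submodule.span R {y | y ∈ x :: l}) := by
  induction l using List.reverseRecOn generalizing k z with
  | nil =>
    rw [bracket_comm]
    exact lie_mem_bracket (Submodule.subset_span (by simp)) (by simpa using hz)
  | append_singleton l y ih =>
    set w := leftNormedBracket x l
    have jacobi : ⁅⁅w, y⁆, z⁆ = ⁅w, ⁅y, z⁆⁆ + ⁅⁅w, z⁆, y⁆ := by
      rw [lie_lie w y z, ← lie_skew y ⁅w, z⁆, sub_neg_eq_add]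
    have hwz : ⁅w, z⁆ ∈ γ R G (l.length + k + 1) :=
      bracket_lowerCentralSeries_le _ _
        (lie_mem_bracket (leftNormedBracket_mem_lowerCentralSeries x l) hz)
    have hwyz := ih (lie_mem_lowerCentralSeries_succ' hz y)
    have length_eq : (l ++ [y]).length + k = l.length + k + 1 := by
      rw [List.length_append, List.length_singleton, add_right_comm]
    rw [leftNormedBracket_append_singleton, jacobi, length_eq]
    refine add_mem (bracket_mono le_rfl (Submodule.span_mono ?_) hwyz)
      (lie_mem_bracket hwz (Submodule.subset_span (by simp)))
    intro t ht
    simp only [Set.mem_ofPred_eq, List.mem_cons, List.mem_append] at ht ⊢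
    tauto

/-- The left-normed brackets of weight `i + 1` with entries in `B`. -/
def leftNormedBrackets (B : Submodule R G) (i : ℕ) : Set G :=
  {w | ∃ x ∈ B, ∃ l : List G, (∀ y ∈ l, y ∈ B) ∧ l.length = i ∧ leftNormedBracket x l = w}

lemma lie_mem_leftNormedBrackets_succ {B : Submodule R G} {i : ℕ} {w y : G}
    (hw : w ∈ leftNormedBrackets B i) (hy : y ∈ B) : ⁅w, y⁆ ∈ leftNormedBrackets B (i + 1) := by
  obtain ⟨x, hx, l, hl, rfl, rfl⟩ := hw
  refine ⟨x, hx, l ++ [y], ?_, by simp, by simp⟩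
  simpa [or_imp, forall_and] using ⟨hl, hy⟩

lemma lowerCentralSeries_le_span_leftNormedBrackets_sup {B : Submodule R G}
    (hB : ⊤ ≤ B ⊔ γ R G 1) (i : ℕ) :
    γ R G i ≤ Submodule.span R (leftNormedBrackets B i) ⊔ γ R G (i + 1) := by
  induction i with
  | zero =>
    refine le_top.trans (hB.trans (sup_le_sup_right ?_ _))
    exact fun x hx ↦ Submodule.subset_span ⟨x, hx, [], by simp, rfl, rfl⟩
  | succ i ih =>
    have bot_le_center : (⊥ : LieIdeal R G) ≤ LieAlgebra.center R G := bot_le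
    rw [← sup_bot_eq (_ ⊔ _), ← LieSubmodule.bot_toSubmodule (L := G)] at hB ih
    have succ_le_bracket := (lowerCentralSeries_succ_le_bracket_sup bot_le_center hB i).trans
      (sup_le_sup_right (bracket_lowerCentralSeries_le_sup_left bot_le_center ih B) _)
    have bracket_le_span : bracket (Submodule.span R (leftNormedBrackets B i)) B ≤
        Submodule.span R (leftNormedBrackets B (i + 1)) := by
      rw [← Submodule.span_eq B, bracket, Submodule.map₂_span_span, Submodule.span_eq]
      refine Submodule.span_mono ?_
      rintro _ ⟨w, hw, y, hy, rfl⟩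
      exact lie_mem_leftNormedBrackets_succ hw hy
    rw [sup_assoc, sup_idem] at succ_le_bracket
    exact succ_le_bracket.trans (sup_le_sup_right bracket_le_span _)

lemma leftNormedBrackets_map_subset (p : G →ₗ⁅R⁆ L) (B : Submodule R G) (i : ℕ) :
    leftNormedBrackets (B.map (p : G →ₗ[R] L)) i ⊆ p '' leftNormedBrackets B i := by
  rintro _ ⟨x, hx, l, hl, rfl, rfl⟩
  let lift : L → G := Function.invFunOn p B
  have lift_mem {y : L} (hy : y ∈ B.map (p : G →ₗ[R] L)) : lift y ∈ B := Function.invFunOn_mem hy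
  have map_lift {y : L} (hy : y ∈ B.map (p : G →ₗ[R] L)) : p (lift y) = y :=
    Function.invFunOn_eq hy
  have map_map_lift : (l.map lift).map p = l := by
    rw [List.map_map]
    exact (List.map_congr_left fun y hy ↦ map_lift (hl y hy)).trans (List.map_id l)
  refine ⟨leftNormedBracket (lift x) (l.map lift),
    ⟨lift x, lift_mem hx, l.map lift, ?_, l.length_map lift, rfl⟩, ?_⟩
  · simpa using fun y hy ↦ lift_mem (hl y hy)
  · rw [map_leftNormedBracket, map_lift hx, map_map_lift]

variable {p : G →ₗ⁅R⁆ L}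

lemma exists_mem_leftNormedBrackets_map_notMem {B : Submodule R G}
    (hB : ⊤ ≤ B.map (p : G →ₗ[R] L) ⊔ γ R L 1) {i : ℕ} (hi : ¬ γ R L i ≤ γ R L (i + 1)) :
    ∃ w ∈ leftNormedBrackets B i, p w ∉ γ R L (i + 1) := by
  contrapose! hi
  refine (lowerCentralSeries_le_span_leftNormedBrackets_sup hB i).trans (sup_le ?_ le_rfl)
  refine Submodule.span_le.2 ((leftNormedBrackets_map_subset p B i).trans ?_)
  rintro _ ⟨w, hw, rfl⟩
  exact hi w hw

lemma lowerCentralSeries_le_sup_ker (hp : Function.Surjective p) {A : Submodule R G} {i : ℕ}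
    (hA : γ R L i ≤ A.map (p : G →ₗ[R] L) ⊔ γ R L (i + 1)) :
    γ R G i ≤ A ⊔ γ R G (i + 1) ⊔ p.ker.toSubmodule := by
  rw [LieHom.ker_toSubmodule, ← LinearMap.map_le_map_iff, Submodule.map_sup,
    map_lowerCentralSeries_of_surjective hp, map_lowerCentralSeries_of_surjective hp]
  exact hA

lemma lowerCentralSeries_succ_le_bracket_sup_bracket {A S T : Submodule R G} {Z : LieIdeal R G}
    (hZ : Z ≤ LieAlgebra.center R G) (hST : ⊤ ≤ S ⊔ T ⊔ γ R G 1 ⊔ Z.toSubmodule) {i : ℕ} {w : G}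
    (hA : γ R G i ≤ A ⊔ Submodule.span R {w} ⊔ γ R G (i + 1) ⊔ Z.toSubmodule)
    (hw : ∀ z, ⁅w, z⁆ ∈ bracket (γ R G i) S) :
    γ R G (i + 1) ≤ bracket (A ⊔ Submodule.span R {w}) S ⊔ bracket A T ⊔ γ R G (i + 2) := by
  have bracket_S_le := bracket_lowerCentralSeries_le_sup_left hZ hA S
  have bracket_T_le := bracket_lowerCentralSeries_le_sup_left hZ hA T
  have bracket_w_le : bracket (Submodule.span R {w}) T ≤ bracket (γ R G i) S := by
    refine Submodule.map₂_le.2 fun v hv z _ ↦ ?_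
    obtain ⟨r, rfl⟩ := Submodule.mem_span_singleton.1 hv
    simpa using Submodule.smul_mem _ r (hw z)
  refine (lowerCentralSeries_succ_le_bracket_sup hZ hST i).trans ?_
  rw [bracket_sup_right]
  rw [bracket_sup_left] at bracket_T_le
  set M := bracket (A ⊔ Submodule.span R {w}) S ⊔ bracket A T ⊔ γ R G (i + 2)
  have next_le : γ R G (i + 2) ≤ M := le_sup_right
  have bracket_S_le' : bracket (γ R G i) S ≤ M :=
    bracket_S_le.trans (sup_le (le_sup_left.trans le_sup_left) next_le)
  have bracket_A_T_le : bracket A T ≤ M := le_sup_right.trans le_sup_left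
  exact sup_le (sup_le bracket_S_le' (bracket_T_le.trans
    (sup_le (sup_le bracket_A_T_le (bracket_w_le.trans bracket_S_le')) next_le))) next_le

lemma lowerCentralSeries_succ_lt {M : Type*} [AddCommGroup M] [Module R M] [LieRingModule L M]
    [LieModule R L M] [LieModule.IsNilpotent L M] {i : ℕ}
    (hi : LieModule.lowerCentralSeries R L M i ≠ ⊥) :
    LieModule.lowerCentralSeries R L M (i + 1) < LieModule.lowerCentralSeries R L M i := by
  refine (LieModule.antitone_lowerCentralSeries R L M i.le_succ).lt_of_ne fun h ↦ hi ?_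
  obtain ⟨k, hk⟩ := LieModule.IsNilpotent.nilpotent R L M
  have stable (j : ℕ) :
      LieModule.lowerCentralSeries R L M (i + j) = LieModule.lowerCentralSeries R L M i := by
    induction j with
    | zero => rfl
    | succ j ih =>
      rw [← add_assoc, LieModule.lowerCentralSeries_succ, ih,
        ← LieModule.lowerCentralSeries_succ, h]
  rw [← stable k, eq_bot_iff, ← hk]
  exact LieModule.antitone_lowerCentralSeries R L M (k.le_add_left i)

lemma lowerCentralSeries_eq_bot_iff_nilpotencyLength_le {M : Type*} [AddCommGroup M] [Module R M]
    [LieRingModule L M] [LieModule R L M] [LieModule.IsNilpotent L M] (i : ℕ) :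
    LieModule.lowerCentralSeries R L M i = ⊥ ↔ LieModule.nilpotencyLength L M ≤ i := by
  have eq_bot_iff_int (k : ℕ) : LieModule.lowerCentralSeries R L M k = ⊥ ↔
      LieModule.lowerCentralSeries ℤ L M k = ⊥ := by
    simp [SetLike.ext'_iff, LieModule.coe_lowerCentralSeries_eq_int R L M]
  rw [eq_bot_iff_int]
  refine ⟨fun h ↦ Nat.sInf_le h, fun h ↦ ?_⟩
  have nilpotencyLength_mem : LieModule.lowerCentralSeries ℤ L M _ = ⊥ :=
    Nat.sInf_mem (LieModule.IsNilpotent.nilpotent ℤ L M)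
  exact eq_bot_mono (LieModule.antitone_lowerCentralSeries ℤ L M h) nilpotencyLength_mem

end CommRing

section Field

variable {K G L : Type*} [Field K] [LieRing G] [LieAlgebra K G] [LieRing L] [LieAlgebra K L]
  {p : G →ₗ⁅K⁆ L} {B : Submodule K G}

lemma exists_finrank_eq_lowerCentralSeries_le_sup_ker [FiniteDimensional K L]
    (hp : Function.Surjective p) {i a : ℕ}
    (ha : finrank K (γ K L (i + 1)) + (a + 1) = finrank K (γ K L i)) {w : G}
    (hw : w ∈ γ K G i) (hpw : p w ∉ γ K L (i + 1)) :
    ∃ A : Submodule K G, FiniteDimensional K A ∧ finrank K A = a ∧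
      γ K G i ≤ A ⊔ Submodule.span K {w} ⊔ γ K G (i + 1) ⊔ p.ker.toSubmodule := by
  have map_eq := map_lowerCentralSeries_of_surjective hp i
  have succ_le : γ K L (i + 1) ≤ γ K L i :=
    LieModule.antitone_lowerCentralSeries K L L i.le_succ
  have span_le : Submodule.span K {p w} ≤ γ K L i := by
    rw [Submodule.span_singleton_le_iff_mem, ← map_eq]
    exact Submodule.mem_map_of_mem hw
  obtain ⟨C, hC, hsup, hfinrank⟩ := exists_sup_eq_finrank_add_eq (sup_le succ_le span_le)
  rw [Submodule.finrank_sup_span_singleton hpw] at hfinrank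
  obtain ⟨A, -, hAfin, hA, hAC⟩ :=
    exists_le_map_eq_finrank_eq (p : G →ₗ[K] L) (hC.trans_eq map_eq.symm)
  refine ⟨A, hAfin, by omega, lowerCentralSeries_le_sup_ker hp ?_⟩
  rw [Submodule.map_sup, hA, Submodule.map_span, Set.image_singleton, ← hsup, sup_comm,
    sup_comm (γ K L (i + 1)), ← sup_assoc]
  rfl

lemma relFinrankLE_lowerCentralSeries_one [FiniteDimensional K B] {Z : LieIdeal K G}
    (hZ : Z ≤ LieAlgebra.center K G) (hB : ⊤ ≤ B ⊔ γ K G 1 ⊔ Z.toSubmodule) :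
    RelFinrankLE (γ K G 1) (γ K G 2) ((finrank K B).choose 2) := by
  refine ⟨bracket B B, inferInstance, finrank_map₂_self_le_choose_two (lieBilin K G) lie_self B, ?_⟩
  exact (lowerCentralSeries_succ_le_bracket_sup hZ hB 0).trans
    (sup_le (bracket_lowerCentralSeries_le_sup_left hZ hB B) le_sup_right)

variable [FiniteDimensional K L] [FiniteDimensional K B]

/-- If `w` is a left-normed bracket whose entries span `S` and `B = S ⊕ T`, then `⁅w, T⁆` is
already contained in the brackets with `S`; this saves `dim T` dimensions in the trivial bound
`(a + 1) * dim B`. -/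
lemma relFinrankLE_lowerCentralSeries_succ (hp : Function.Surjective p)
    (hker : p.ker ≤ LieAlgebra.center K G) (hB : ⊤ ≤ B.map (p : G →ₗ[K] L) ⊔ γ K L 1) {i a : ℕ}
    (ha : finrank K (γ K L (i + 1)) + (a + 1) = finrank K (γ K L i)) :
    RelFinrankLE (γ K G (i + 1)) (γ K G (i + 2)) (a * finrank K B + min (finrank K B) (i + 1)) := by
  have not_le : ¬ γ K L i ≤ γ K L (i + 1) := fun h ↦ by
    have := Submodule.finrank_mono h
    omega
  obtain ⟨_, ⟨x, hx, l, hl, rfl, rfl⟩, hpw⟩ := exists_mem_leftNormedBrackets_map_notMem hB not_le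
  set w := leftNormedBracket x l
  let S := Submodule.span K {y | y ∈ x :: l}
  have hSB : S ≤ B := Submodule.span_le.2 (List.forall_mem_cons.2 ⟨hx, hl⟩)
  obtain ⟨T, hTB, hST, finrank_S_add_T⟩ := exists_sup_eq_finrank_add_eq hSB
  have : FiniteDimensional K S := Submodule.finiteDimensional_of_le hSB
  have : FiniteDimensional K T := Submodule.finiteDimensional_of_le hTB
  obtain ⟨A, _, rfl, hA⟩ := exists_finrank_eq_lowerCentralSeries_le_sup_ker hp ha
    (leftNormedBracket_mem_lowerCentralSeries x l) hpw
  have top_le : ⊤ ≤ S ⊔ T ⊔ γ K G 1 ⊔ p.ker.toSubmodule :=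
    hST ▸ lowerCentralSeries_le_sup_ker hp (i := 0) hB
  refine ⟨bracket (A ⊔ Submodule.span K {w}) S ⊔ bracket A T, inferInstance, ?_,
    lowerCentralSeries_succ_le_bracket_sup_bracket hker top_le hA
      fun z ↦ lie_leftNormedBracket_mem_bracket x l (k := 0) (by simp)⟩
  have finrank_S_le : finrank K S ≤ l.length + 1 := finrank_span_list_le (x :: l)
  have finrank_le : finrank K ↥(bracket (A ⊔ Submodule.span K {w}) S ⊔ bracket A T) ≤ _ :=
    finrank_map₂_sup_span_singleton_sup_map₂_le (lieBilin K G) A w S T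
  rw [finrank_S_add_T] at finrank_le
  omega

lemma exists_relFinrankLE_lowerCentralSeries (hp : Function.Surjective p)
    (hker : p.ker ≤ LieAlgebra.center K G) (hB : ⊤ ≤ B.map (p : G →ₗ[K] L) ⊔ γ K L 1) (k : ℕ)
    (hk : ∀ i ≤ k, 1 ≤ i → γ K L (i + 1) < γ K L i) :
    ∃ r, RelFinrankLE (γ K G 1) (γ K G (k + 2)) r ∧
      r + ∑ i ∈ Finset.Icc 2 (k + 1), (finrank K B - i) + finrank K B * finrank K (γ K L (k + 1)) ≤
        (finrank K B).choose 2 + finrank K B * finrank K (γ K L 1) := by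
  induction k with
  | zero =>
    exact ⟨_, relFinrankLE_lowerCentralSeries_one hker
      (lowerCentralSeries_le_sup_ker hp (i := 0) hB), by simp⟩
  | succ k ih =>
    obtain ⟨r, hr, hr_le⟩ := ih fun i hi ↦ hk i (hi.trans k.le_succ)
    obtain ⟨a, ha⟩ := Nat.exists_eq_add_of_lt
      (Submodule.finrank_lt_finrank_of_lt (hk (k + 1) le_rfl (Nat.le_add_left 1 k)))
    refine ⟨_, hr.trans (relFinrankLE_lowerCentralSeries_succ hp hker hB ha.symm), ?_⟩
    rw [ha] at hr_le
    rw [Finset.sum_Icc_succ_top (by omega)]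
    have min_add_sub :
        min (finrank K B) (k + 1 + 1) + (finrank K B - (k + 1 + 1)) = finrank K B := by omega
    linarith

end Field

section CentralExtension

variable {K G L : Type*} [Field K] [LieRing G] [LieAlgebra K G] [LieRing L] [LieAlgebra K L]
  [FiniteDimensional K L] [LieRing.IsNilpotent L] {p : G →ₗ⁅K⁆ L}

lemma exists_relFinrankLE_lowerCentralSeries_bot (hp : Function.Surjective p)
    (hker : p.ker ≤ LieAlgebra.center K G) {d : ℕ}
    (hd : d + finrank K (γ K L 1) = finrank K L) :
    ∃ r, RelFinrankLE (γ K G 1) ⊥ r ∧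
      r + ∑ i ∈ Finset.Icc 2 (LieModule.nilpotencyLength L L), (d - i) ≤
        d.choose 2 + d * finrank K (γ K L 1) := by
  obtain ⟨C, -, hsup, hfinrank⟩ := exists_sup_eq_finrank_add_eq (le_top (a := γ K L 1))
  rw [finrank_top] at hfinrank
  obtain ⟨B, -, _, hBC, hB⟩ := exists_le_map_eq_finrank_eq (p : G →ₗ[K] L) (V := ⊤) (C := C)
    (by simp [LinearMap.range_eq_top.2 hp])
  have top_le : ⊤ ≤ B.map (p : G →ₗ[K] L) ⊔ γ K L 1 := by rw [hBC, sup_comm, hsup]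
  obtain rfl : finrank K B = d := by omega
  set c := LieModule.nilpotencyLength L L
  have eq_bot_iff (i : ℕ) : LieModule.lowerCentralSeries K L L i = ⊥ ↔ c ≤ i :=
    lowerCentralSeries_eq_bot_iff_nilpotencyLength_le i
  obtain ⟨r, hr, hr_le⟩ := exists_relFinrankLE_lowerCentralSeries hp hker top_le (c - 1)
    fun i hi hi' ↦ lowerCentralSeries_succ_lt (mt (eq_bot_iff i).1 (by omega))
  refine ⟨r, ?_, ?_⟩
  · have next_eq_bot : γ K G (c - 1 + 1 + 1) = ⊥ :=
      lowerCentralSeries_succ_eq_bot_of_ker_le_center hp hker ((eq_bot_iff _).2 (by omega))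
    rwa [next_eq_bot] at hr
  · have Icc_subset : Finset.Icc 2 c ⊆ Finset.Icc 2 (c - 1 + 1) :=
      Finset.Icc_subset_Icc_right (by omega)
    have sum_le := Finset.sum_le_sum_of_subset (f := fun i ↦ finrank K B - i) Icc_subset
    omega

end CentralExtension

section HopfFormula

section CommRing

variable {R F L : Type*} [CommRing R] [LieRing F] [LieAlgebra R F] [LieRing L] [LieAlgebra R L]
  (π : F →ₗ⁅R⁆ L)

/-- Hopf's formula `(ker π ∩ F²)/[ker π, F]`, which is the Schur multiplier of `L` when `π` is a
surjection from a free Lie algebra `F`. -/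
abbrev HopfMultiplier : Type _ :=
  ↥(π.ker ⊓ LieModule.lowerCentralSeries R F F 1).toSubmodule ⧸
    (⁅π.ker, (⊤ : LieIdeal R F)⁆.toSubmodule).comap
      (π.ker ⊓ LieModule.lowerCentralSeries R F F 1).toSubmodule.subtype

/-- The Lie algebra `F/[ker π, F]`, the largest quotient of `F` that is a central extension of the
image of `π`. -/
abbrev CentralCover : Type _ :=
  F ⧸ ⁅π.ker, (⊤ : LieIdeal R F)⁆

namespace CentralCover

/-- The quotient map `F → F/[ker π, F]`. -/
def mk : F →ₗ⁅R⁆ CentralCover π :=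
  { (LieSubmodule.Quotient.mk' ⁅π.ker, (⊤ : LieIdeal R F)⁆ : F →ₗ[R] CentralCover π) with
    map_lie' := rfl }

lemma mk_surjective : Function.Surjective (mk π) :=
  LieSubmodule.Quotient.surjective_mk' _

lemma mk_eq_zero_iff {x : F} : mk π x = 0 ↔ x ∈ ⁅π.ker, (⊤ : LieIdeal R F)⁆ :=
  LieSubmodule.Quotient.mk_eq_zero _

/-- The map `F/[ker π, F] → L` induced by `π`. -/
def proj : CentralCover π →ₗ⁅R⁆ L :=
  { (⁅π.ker, (⊤ : LieIdeal R F)⁆.toSubmodule).liftQ (π : F →ₗ[R] L)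
      (LieSubmodule.lie_le_left π.ker ⊤) with
    map_lie' {x y} := by
      obtain ⟨x, rfl⟩ := mk_surjective π x
      obtain ⟨y, rfl⟩ := mk_surjective π y
      exact π.map_lie x y }

variable {π} in
lemma proj_surjective (hπ : Function.Surjective π) : Function.Surjective (proj π) :=
  .of_comp (g := mk π) hπ

lemma ker_proj_le_center : (proj π).ker ≤ LieAlgebra.center R (CentralCover π) := by
  intro z hz y
  obtain ⟨z, rfl⟩ := mk_surjective π z
  obtain ⟨y, rfl⟩ := mk_surjective π y
  have hz : z ∈ π.ker := hz
  rw [← LieHom.map_lie, mk_eq_zero_iff, LieSubmodule.lie_comm]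
  exact LieSubmodule.lie_mem_lie (LieSubmodule.mem_top y) hz

end CentralCover

namespace HopfMultiplier

/-- The map `(ker π ∩ F²)/[ker π, F] → F/[ker π, F]` induced by the inclusion. -/
def toCentralCover : HopfMultiplier π →ₗ[R] CentralCover π :=
  Submodule.mapQ _ _ (π.ker ⊓ LieModule.lowerCentralSeries R F F 1).toSubmodule.subtype le_rfl

lemma toCentralCover_injective : Function.Injective (toCentralCover π) :=
  LinearMap.ker_eq_bot.1 (Submodule.ker_liftQ_eq_bot _ _ _
    (by rw [LinearMap.ker_comp, Submodule.ker_mkQ]))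

lemma range_toCentralCover_le : LinearMap.range (toCentralCover π) ≤
    γ R (CentralCover π) 1 ⊓ LinearMap.ker (CentralCover.proj π : CentralCover π →ₗ[R] L) := by
  rintro _ ⟨x, rfl⟩
  obtain ⟨⟨x, hx_ker, hx⟩, rfl⟩ := Submodule.Quotient.mk_surjective _ x
  refine ⟨?_, hx_ker⟩
  rw [← map_lowerCentralSeries_of_surjective (CentralCover.mk_surjective π) 1]
  exact Submodule.mem_map_of_mem hx

end HopfMultiplier
end CommRing

section Field

variable {K F L : Type*} [Field K] [LieRing F] [LieAlgebra K F] [LieRing L] [LieAlgebra K L]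
  {π : F →ₗ⁅K⁆ L} [FiniteDimensional K (γ K (CentralCover π) 1)]

instance finiteDimensional_hopfMultiplier : FiniteDimensional K (HopfMultiplier π) :=
  have := Submodule.finiteDimensional_of_le
    ((HopfMultiplier.range_toCentralCover_le π).trans inf_le_left)
  .of_injective (HopfMultiplier.toCentralCover π).rangeRestrict
    ((LinearMap.injective_rangeRestrict_iff _).2 (HopfMultiplier.toCentralCover_injective π))

lemma finrank_hopfMultiplier_add_le (hπ : Function.Surjective π) :
    finrank K (HopfMultiplier π) + finrank K (γ K L 1) ≤ finrank K (γ K (CentralCover π) 1) := by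
  have finrank_le : finrank K (HopfMultiplier π) ≤ finrank K ↥(γ K (CentralCover π) 1 ⊓
      LinearMap.ker (CentralCover.proj π : CentralCover π →ₗ[K] L)) := by
    rw [← LinearMap.finrank_range_of_inj (HopfMultiplier.toCentralCover_injective π)]
    exact Submodule.finrank_mono (HopfMultiplier.range_toCentralCover_le π)
  rw [← map_lowerCentralSeries_of_surjective (CentralCover.proj_surjective hπ), add_comm,
    ← finrank_map_add_finrank_inf_ker (CentralCover.proj π : CentralCover π →ₗ[K] L)]
  exact Nat.add_le_add_left finrank_le _

end Field
end HopfFormula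

section Arithmetic

lemma mul_sub_one_ediv_two_eq (d m : ℕ) :
    ((d : ℤ) - 1) * (d + 2 * m) / 2 = d.choose 2 + (d - 1) * m := by
  have choose_two_mul_two : (d.choose 2 : ℤ) * 2 = d * (d - 1) := by
    qify
    rw [Nat.cast_choose_two]
    ring
  rw [show ((d : ℤ) - 1) * (d + 2 * m) = (d.choose 2 + (d - 1) * m) * 2 by
    linear_combination -choose_two_mul_two, Int.mul_ediv_cancel _ two_ne_zero]

lemma sum_Icc_min_sub_le (d c : ℕ) :
    ∑ i ∈ Finset.Icc 2 (min d c), ((d : ℤ) - i) ≤ (∑ i ∈ Finset.Icc 2 c, (d - i) : ℕ) := by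
  calc ∑ i ∈ Finset.Icc 2 (min d c), ((d : ℤ) - i)
      = (∑ i ∈ Finset.Icc 2 (min d c), (d - i) : ℕ) := by
        rw [Nat.cast_sum]
        refine Finset.sum_congr rfl fun i hi ↦ (Nat.cast_sub ?_).symm
        exact (Finset.mem_Icc.1 hi).2.trans (min_le_left d c)
    _ ≤ (∑ i ∈ Finset.Icc 2 c, (d - i) : ℕ) :=
        Nat.cast_le.2 (Finset.sum_le_sum_of_subset
          (Finset.Icc_subset_Icc_right (min_le_right d c)))

lemma le_raiBound {x d m c : ℕ}
    (h : x + m + ∑ i ∈ Finset.Icc 2 c, (d - i) ≤ d.choose 2 + d * m) :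
    (x : ℤ) ≤ raiBound (d + m) m c := by
  have raiBound_eq : raiBound (d + m) m c =
      d.choose 2 + (d - 1) * m - ∑ i ∈ Finset.Icc 2 (min d c), ((d : ℤ) - i) := by
    rw [raiBound, ← mul_sub_one_ediv_two_eq, Nat.add_sub_cancel, Nat.cast_add, add_sub_cancel_right]
    ring_nf
  have sum_le := sum_Icc_min_sub_le d c
  zify at h
  push_cast at sum_le
  rw [raiBound_eq]
  linarith

end Arithmetic

lemma isNilpotent_and_nilpotencyLength_eq_of_lieNilpotencyClass {K L : Type} [Field K]
    [LieRing L] [LieAlgebra K L] {c : ℕ} (hc : lieNilpotencyClass K L c) :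
    LieRing.IsNilpotent L ∧ LieModule.nilpotencyLength L L = c := by
  have nilpotent : LieRing.IsNilpotent L := LieModule.IsNilpotent.mk L hc.1
  have eq_bot_iff := lowerCentralSeries_eq_bot_iff_nilpotencyLength_le (R := K) (L := L) (M := L)
  refine ⟨nilpotent, le_antisymm ((eq_bot_iff c).1 hc.1) (not_lt.1 fun hlt ↦ ?_)⟩
  exact hc.2 _ hlt ((eq_bot_iff _).2 le_rfl)

end RaiBound

theorem schur_multiplier_rai_bound_general {K F L : Type*} [Field K] [LieRing F] [LieAlgebra K F]
    [LieRing L] [LieAlgebra K L] [FiniteDimensional K L] [LieRing.IsNilpotent L]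
    (π : F →ₗ⁅K⁆ L) (hπ : Function.Surjective π) :
    FiniteDimensional K (RaiBound.HopfMultiplier π) ∧
      (finrank K (RaiBound.HopfMultiplier π) : ℤ) ≤
        raiBound (finrank K L) (finrank K (LieModule.lowerCentralSeries K L L 1))
          (LieModule.nilpotencyLength L L) := by
  obtain ⟨d, hd⟩ := Nat.exists_eq_add_of_le'
    (Submodule.finrank_le (LieModule.lowerCentralSeries K L L 1).toSubmodule)
  obtain ⟨r, hr, hr_le⟩ := RaiBound.exists_relFinrankLE_lowerCentralSeries_bot
    (RaiBound.CentralCover.proj_surjective hπ) (RaiBound.CentralCover.ker_proj_le_center π) hd.symm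
  have := hr.finiteDimensional
  refine ⟨inferInstance, ?_⟩
  have finrank_add_le := (RaiBound.finrank_hopfMultiplier_add_le hπ).trans hr.finrank_le
  rw [hd]
  exact RaiBound.le_raiBound ((Nat.add_le_add_right finrank_add_le _).trans hr_le)

/-- Rai's bound: for an `n`-dimensional nilpotent Lie algebra `L` of
nilpotency class `c` with `dim L² = m ≥ 1`,
`dim M(L) ≤ (1/2)(n−m−1)(n+m) − Σ_{i=2}^{min(n−m,c)} (n−m−i)`. -/
theorem schur_multiplier_rai_bound (K L : Type) [Field K] [LieRing L] [LieAlgebra K L]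
    [FiniteDimensional K L] (n m c : ℕ)
    (hn : Module.finrank K L = n) (hm : lieDerivedDim K L = m) (hm1 : 1 ≤ m)
    (hc : lieNilpotencyClass K L c) :
    ∀ (X : Type) (π : FreeLieAlgebra K X →ₗ⁅K⁆ L), Function.Surjective π →
      (lieSchurMultiplierDim K X π : ℤ) ≤ raiBound n m c := by
  subst hn hm
  obtain ⟨_, rfl⟩ := RaiBound.isNilpotent_and_nilpotencyLength_eq_of_lieNilpotencyClass hc
  exact fun X π hπ ↦ (schur_multiplier_rai_bound_general π hπ).2
end

section
/- Let L be a finite-dimensional Lie algebra and K a central ideal of L. Then dim M(L) + dim(L² ∩ K) ≤ dim M(L/K) + dim M(K) + dim((L/K)^{ab} ⊗ K), where (L/K)^{ab} = (L/K)/(L/K)² and ⊗ is the tensor product of the underlying vector spaces (abelian Lie algebras). -/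
open Module TensorProduct

/-!
Write `R = ker π` and `S = π⁻¹(I)` for a free presentation `π : E → L`, so that `[S, E] ≤ R`.
Filtering `(S ∩ E²) / [R, E]` through `R ∩ E²` gives `dim M(L) + dim (L² ∩ I)`; filtering it through
`[S, E]` gives `dim [S, E] / [R, E] + dim (S ∩ E²) / [S, E]`. The last term is bounded by
`dim M(L/I)`: lifting a free presentation of `L/I` to `E` shows that `(S ∩ E²) / [S, E]` is a
quotient of the multiplier. In the same way `S → I` shows that the image of `[S, S]` in
`[S, E] / [R, E]` is a quotient of `M(I)`. What remains of `[S, E]` is covered by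
`(L/I)^ab ⊗ I` through the bracket, because the Jacobi identity puts `[S, E²]` inside `[R, E]`.
-/

universe u

section LinearAlgebra

open Submodule LinearMap

variable {K : Type*} [Field K]

theorem exists_tensorProduct_lift_of_ker_le {U V W P Q : Type*}
    [AddCommGroup U] [Module K U] [AddCommGroup V] [Module K V] [AddCommGroup W] [Module K W]
    [AddCommGroup P] [Module K P] [AddCommGroup Q] [Module K Q]
    (f : U →ₗ[K] V →ₗ[K] W) {p : U →ₗ[K] P} {q : V →ₗ[K] Q}
    (hp : Function.Surjective p) (hq : Function.Surjective q)
    (hpf : ker p ≤ ker f) (hqf : ker q ≤ ker f.flip) :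
    ∃ T : P ⊗[K] Q →ₗ[K] W, ∀ x y, T (p x ⊗ₜ q y) = f x y := by
  obtain ⟨s, hs⟩ := p.exists_rightInverse_of_surjective (range_eq_top.2 hp)
  obtain ⟨t, ht⟩ := q.exists_rightInverse_of_surjective (range_eq_top.2 hq)
  have hs_sub (x : U) : f (s (p x)) = f x :=
    sub_mem_ker_iff.1 <| hpf <| sub_mem_ker_iff.2 <| LinearMap.congr_fun hs (p x)
  have ht_sub (y : V) : f.flip (t (q y)) = f.flip y :=
    sub_mem_ker_iff.1 <| hqf <| sub_mem_ker_iff.2 <| LinearMap.congr_fun ht (q y)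
  refine ⟨TensorProduct.lift (f.compl₁₂ s t), fun x y => ?_⟩
  calc TensorProduct.lift (f.compl₁₂ s t) (p x ⊗ₜ q y) = f (s (p x)) (t (q y)) := rfl
    _ = f x (t (q y)) := by rw [hs_sub]
    _ = f x y := LinearMap.congr_fun (ht_sub y) x

variable {U V W : Type u} [AddCommGroup U] [Module K U] [AddCommGroup V] [Module K V]
  [AddCommGroup W] [Module K W]

/-- The dimension of `A / (A ∩ N)` for subspaces `N` and `A` of a vector space, the linear analogue
of `Subgroup.relIndex`. It is a cardinal, so that it is additive and monotone without any finiteness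
assumption. -/
noncomputable def relRank (N A : Submodule K V) : Cardinal.{u} :=
  Module.rank K (A ⧸ N.submoduleOf A)

theorem rank_map_eq_relRank (f : V →ₗ[K] W) {N A : Submodule K V} (h : A ⊓ ker f = A ⊓ N) :
    Module.rank K (A.map f) = relRank N A := by
  have hker : ker (f ∘ₗ A.subtype) = N.submoduleOf A := by
    ext x
    simpa [submoduleOf] using SetLike.ext_iff.1 h (x : V)
  rw [← range_domRestrict, ← (f.domRestrict A).quotKerEquivRange.rank_eq]
  exact (quotEquivOfEq _ _ hker).rank_eq

theorem rank_map_mkQ_eq_relRank (N A : Submodule K V) :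
    Module.rank K (A.map N.mkQ) = relRank N A :=
  rank_map_eq_relRank _ (by rw [ker_mkQ])

theorem relRank_add_relRank {N B A : Submodule K V} (hNB : N ≤ B) (hBA : B ≤ A) :
    relRank N B + relRank B A = relRank N A := by
  let N' := N.submoduleOf A
  let B' := B.submoduleOf A
  have hB : Module.rank K (B'.map N'.mkQ) = relRank N B := by
    have hrange : range (N'.mkQ ∘ₗ inclusion hBA) = B'.map N'.mkQ := by
      rw [range_comp, range_inclusion]
      rfl
    have hker : ker (N'.mkQ ∘ₗ inclusion hBA) = N.submoduleOf B := by
      rw [ker_comp, ker_mkQ]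
      rfl
    rw [← hrange, ← (N'.mkQ ∘ₗ inclusion hBA).quotKerEquivRange.rank_eq]
    exact (quotEquivOfEq _ _ hker).rank_eq
  have hA : Module.rank K ((A ⧸ N') ⧸ B'.map N'.mkQ) = relRank B A :=
    (quotientQuotientEquivQuotient N' B' (comap_mono hNB)).rank_eq
  rw [← hB, ← hA, add_comm]
  exact rank_quotient_add_rank (B'.map N'.mkQ)

theorem relRank_le_rank {N A : Submodule K V} (f : U →ₗ[K] V ⧸ N) (hA : A.map N.mkQ ≤ range f) :
    relRank N A ≤ Module.rank K U := by
  rw [← rank_map_mkQ_eq_relRank]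
  exact (rank_mono hA).trans (rank_range_le f)

theorem relRank_le_relRank_of_le_map_sup (f : V →ₗ[K] W) {N A : Submodule K V}
    {N' A' : Submodule K W} (hN : N ≤ N'.comap f) (hA : A' ≤ A.map f ⊔ N') :
    relRank N' A' ≤ relRank N A := by
  refine relRank_le_rank ((N.submoduleOf A).mapQ N' (f ∘ₗ A.subtype) fun _ hx => hN hx) ?_
  rw [range_mapQ, range_comp, range_subtype]
  calc A'.map N'.mkQ ≤ (A.map f ⊔ N').map N'.mkQ := map_mono hA
    _ = (A.map f).map N'.mkQ := by rw [Submodule.map_sup, mkQ_map_self, sup_bot_eq]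

end LinearAlgebra

section LieIdeals

open LieModule

variable {K E : Type*} [CommRing K] [LieRing E] [LieAlgebra K E]

theorem lie_toSubmodule_le_iff {A B : LieIdeal K E} {P : Submodule K E} :
    (⁅A, B⁆ : LieIdeal K E).toSubmodule ≤ P ↔ ∀ x ∈ A, ∀ y ∈ B, ⁅x, y⁆ ∈ P := by
  rw [LieSubmodule.lieIdeal_oper_eq_linear_span', Submodule.span_le]
  exact ⟨fun h x hx y hy => h ⟨x, hx, y, hy, rfl⟩, fun h _ ⟨x, hx, y, hy, e⟩ => e ▸ h x hx y hy⟩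

theorem lie_lie_le_lie_lie_sup (A B C : LieIdeal K E) :
    ⁅A, ⁅B, C⁆⁆ ≤ ⁅⁅A, B⁆, C⁆ ⊔ ⁅⁅A, C⁆, B⁆ := by
  rw [LieSubmodule.lie_le_iff]
  intro a ha
  suffices (⁅B, C⁆ : LieIdeal K E).toSubmodule ≤
      (⁅⁅A, B⁆, C⁆ ⊔ ⁅⁅A, C⁆, B⁆ : LieIdeal K E).toSubmodule.comap (LieAlgebra.ad K E a) from this
  rw [lie_toSubmodule_le_iff]
  intro b hb c hc
  have hjacobi : ⁅a, ⁅b, c⁆⁆ = ⁅⁅a, b⁆, c⁆ - ⁅⁅a, c⁆, b⁆ := by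
    rw [leibniz_lie, ← lie_skew b, sub_eq_add_neg]
  rw [Submodule.mem_comap, LieAlgebra.ad_apply, hjacobi]
  exact sub_mem
    (LieSubmodule.mem_sup_left (LieSubmodule.lie_mem_lie (LieSubmodule.lie_mem_lie ha hb) hc))
    (LieSubmodule.mem_sup_right (LieSubmodule.lie_mem_lie (LieSubmodule.lie_mem_lie ha hc) hb))

theorem lowerCentralSeries_one_eq_lie_top_top :
    lowerCentralSeries K E E 1 = ⁅(⊤ : LieIdeal K E), (⊤ : LieIdeal K E)⁆ := rfl

theorem lie_lowerCentralSeries_one_sup_le {R S : LieIdeal K E}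
    (hSR : ⁅S, (⊤ : LieIdeal K E)⁆ ≤ R) :
    ⁅(lowerCentralSeries K E E 1 ⊔ S : LieIdeal K E), S⁆ ≤ ⁅S, S⁆ ⊔ ⁅R, (⊤ : LieIdeal K E)⁆ := by
  have hE : ⁅S, lowerCentralSeries K E E 1⁆ ≤ ⁅R, (⊤ : LieIdeal K E)⁆ :=
    (lie_lie_le_lie_lie_sup S ⊤ ⊤).trans (by rw [sup_idem]; exact LieSubmodule.mono_lie_left _ hSR)
  rw [LieSubmodule.sup_lie, sup_comm, LieSubmodule.lie_comm (lowerCentralSeries K E E 1) S]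
  exact sup_le_sup_left hE _

variable {L : Type*} [LieRing L] [LieAlgebra K L]

theorem lowerCentralSeries_one_le_map_sup_lie_top (φ : E →ₗ⁅K⁆ L) (R : LieIdeal K L)
    (hφ : ∀ y, ∃ x, y - φ x ∈ R) :
    (lowerCentralSeries K L L 1).toSubmodule ≤
      (lowerCentralSeries K E E 1).toSubmodule.map (φ : E →ₗ[K] L) ⊔
        (⁅R, (⊤ : LieIdeal K L)⁆ : LieIdeal K L).toSubmodule := by
  rw [lowerCentralSeries_one_eq_lie_top_top, lie_toSubmodule_le_iff]
  intro y _ y' _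
  obtain ⟨x, hx⟩ := hφ y
  obtain ⟨x', hx'⟩ := hφ y'
  have hsplit : ⁅y, y'⁆ = φ ⁅x, x'⁆ + (⁅y - φ x, y'⁆ - ⁅y' - φ x', φ x⁆) := by
    rw [LieHom.map_lie, sub_lie, sub_lie, ← lie_skew (φ x) y', ← lie_skew (φ x) (φ x')]
    abel
  rw [hsplit]
  exact Submodule.add_mem_sup
    ⟨_, LieSubmodule.lie_mem_lie (LieSubmodule.mem_top x) (LieSubmodule.mem_top x'), rfl⟩
    (sub_mem (LieSubmodule.lie_mem_lie hx (LieSubmodule.mem_top _))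
      (LieSubmodule.lie_mem_lie hx' (LieSubmodule.mem_top _)))

theorem exists_freeLieAlgebra_lift_of_surjective {Y : Type*}
    (ρ : FreeLieAlgebra K Y →ₗ⁅K⁆ L) {π : E →ₗ⁅K⁆ L} (hπ : Function.Surjective π) :
    ∃ φ : FreeLieAlgebra K Y →ₗ⁅K⁆ E, π.comp φ = ρ := by
  choose s hs using hπ
  exact ⟨FreeLieAlgebra.lift K fun y => s (ρ (FreeLieAlgebra.of K y)),
    FreeLieAlgebra.hom_ext fun y => by rw [LieHom.comp_apply, FreeLieAlgebra.lift_of_apply, hs]⟩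

/-- The quotient map by an ideal, as a homomorphism of Lie algebras
(`LieSubmodule.Quotient.mk'` is only a homomorphism of Lie modules). -/
def quotientLieHom (I : LieIdeal K L) : L →ₗ⁅K⁆ L ⧸ I where
  toLinearMap := LieSubmodule.Quotient.mk' I
  map_lie' {x y} := LieSubmodule.Quotient.mk_bracket I x y

theorem quotientLieHom_surjective (I : LieIdeal K L) : Function.Surjective (quotientLieHom I) :=
  LieSubmodule.Quotient.surjective_mk' I

theorem ker_quotientLieHom_comp (I : LieIdeal K L) (π : E →ₗ⁅K⁆ L) :
    ((quotientLieHom I).comp π).ker = I.comap π := by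
  ext x
  exact LieSubmodule.Quotient.mk_eq_zero I

/-- The restriction of a homomorphism of Lie algebras to the preimage of an ideal. -/
def comapRestrict (π : E →ₗ⁅K⁆ L) (I : LieIdeal K L) : I.comap π →ₗ⁅K⁆ I where
  toLinearMap := (π : E →ₗ[K] L).restrict (p := (I.comap π).toSubmodule) (q := I.toSubmodule)
    fun _ => id
  map_lie' := Subtype.ext (π.map_lie _ _)

theorem comapRestrict_surjective {π : E →ₗ⁅K⁆ L} (hπ : Function.Surjective π) (I : LieIdeal K L) :
    Function.Surjective (comapRestrict π I) := by
  rintro ⟨z, hz⟩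
  obtain ⟨x, rfl⟩ := hπ z
  exact ⟨⟨x, hz⟩, rfl⟩

theorem ker_comapRestrict (π : E →ₗ⁅K⁆ L) (I : LieIdeal K L) :
    (comapRestrict π I).ker = π.ker.comap (I.comap π).incl := by
  ext x
  exact Subtype.ext_iff

theorem lie_comap_top_le_ker_of_le_center (π : E →ₗ⁅K⁆ L) {I : LieIdeal K L}
    (hI : I ≤ LieAlgebra.center K L) : ⁅I.comap π, (⊤ : LieIdeal K E)⁆ ≤ π.ker := by
  rw [LieSubmodule.lie_comm, LieSubmodule.lie_le_iff]
  intro y _ x hx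
  rw [LieHom.mem_ker, LieHom.map_lie]
  exact hI hx (π y)

theorem map_comap_inf_lowerCentralSeries_one {π : E →ₗ⁅K⁆ L} (hπ : Function.Surjective π)
    (I : LieIdeal K L) :
    (I.comap π ⊓ lowerCentralSeries K E E 1 : LieIdeal K E).toSubmodule.map (π : E →ₗ[K] L) =
      (lowerCentralSeries K L L 1).toSubmodule ⊓ I.toSubmodule := by
  have hmap : (lowerCentralSeries K E E 1).toSubmodule.map (π : E →ₗ[K] L) =
      (lowerCentralSeries K L L 1).toSubmodule := by
    rw [← LieIdeal.lowerCentralSeries_map_eq 1 hπ, LieIdeal.coe_map_of_surjective hπ]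
  rw [LieSubmodule.inf_toSubmodule, LieIdeal.comap_toSubmodule, inf_comm,
    ← Submodule.map_inf_eq_map_inf_comap, hmap]

theorem comap_lowerCentralSeries_one_eq_sup_ker {π : E →ₗ⁅K⁆ L} (hπ : Function.Surjective π) :
    LieIdeal.comap π (lowerCentralSeries K L L 1) = lowerCentralSeries K E E 1 ⊔ π.ker := by
  rw [← LieIdeal.lowerCentralSeries_map_eq 1 hπ, LieIdeal.comap_map_eq]
  exact congrArg SetLike.coe (LieIdeal.coe_map_of_surjective hπ)

end LieIdeals

section HopfRank

open LieModule

variable {K : Type*} {E : Type u} [Field K] [LieRing E] [LieAlgebra K E]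

/-- The dimension of `(R ∩ E²) / [R, E]` for an ideal `R` of a Lie algebra `E`. By definition it is
the dimension of the Schur multiplier of `E / R` when `E` is free; the proof compares it across
extensions `E` that are not free. -/
noncomputable def hopfRank (R : LieIdeal K E) : Cardinal.{u} :=
  relRank (⁅R, (⊤ : LieIdeal K E)⁆ : LieIdeal K E).toSubmodule
    (R ⊓ lowerCentralSeries K E E 1 : LieIdeal K E).toSubmodule

theorem hopfRank_le_hopfRank_comap {E' : Type u} [LieRing E'] [LieAlgebra K E']
    (φ : E →ₗ⁅K⁆ E') (R : LieIdeal K E') (hφ : ∀ y, ∃ x, y - φ x ∈ R) :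
    hopfRank R ≤ hopfRank (R.comap φ) := by
  refine relRank_le_relRank_of_le_map_sup (φ : E →ₗ[K] E') ?_ ?_
  · exact lie_toSubmodule_le_iff.2 fun x hx y _ => by
      simpa using LieSubmodule.lie_mem_lie (LieIdeal.mem_comap.1 hx) (LieSubmodule.mem_top (φ y))
  · rintro y ⟨hyR, hy⟩
    obtain ⟨_, ⟨x, hx, rfl⟩, z, hz, rfl⟩ :=
      Submodule.mem_sup.1 (lowerCentralSeries_one_le_map_sup_lie_top φ R hφ hy)
    have hφx : φ x ∈ R := (add_mem_cancel_right (LieSubmodule.lie_le_left _ _ hz)).1 hyR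
    exact Submodule.add_mem_sup ⟨x, ⟨hφx, hx⟩, rfl⟩ hz

theorem hopfRank_ker_le_hopfRank_ker_of_free {K E Q Y : Type u} [Field K]
    [LieRing E] [LieAlgebra K E] [LieRing Q] [LieAlgebra K Q]
    {ρ : FreeLieAlgebra K Y →ₗ⁅K⁆ Q} (hρ : Function.Surjective ρ)
    {σ : E →ₗ⁅K⁆ Q} (hσ : Function.Surjective σ) : hopfRank σ.ker ≤ hopfRank ρ.ker := by
  obtain ⟨φ, rfl⟩ := exists_freeLieAlgebra_lift_of_surjective ρ hσ
  refine hopfRank_le_hopfRank_comap φ σ.ker fun y => ?_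
  obtain ⟨x, hx⟩ := hρ (σ y)
  exact ⟨x, by rw [LieHom.mem_ker, map_sub, ← hx, LieHom.comp_apply, sub_self]⟩

theorem relRank_lie_le_rank_tensorProduct {A B N : LieIdeal K E} {P Q : Type u}
    [AddCommGroup P] [Module K P] [AddCommGroup Q] [Module K Q] {p : A →ₗ[K] P} {q : B →ₗ[K] Q}
    (hp : Function.Surjective p) (hq : Function.Surjective q)
    (hpN : ∀ x : A, p x = 0 → ∀ y : B, ⁅(x : E), (y : E)⁆ ∈ N)
    (hqN : ∀ y : B, q y = 0 → ∀ x : A, ⁅(x : E), (y : E)⁆ ∈ N) :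
    relRank N.toSubmodule (⁅A, B⁆ : LieIdeal K E).toSubmodule ≤ Module.rank K (P ⊗[K] Q) := by
  let f : A →ₗ[K] B →ₗ[K] E ⧸ N.toSubmodule :=
    ((LieModule.toEnd K E E : E →ₗ[K] Module.End K E).compl₁₂ A.toSubmodule.subtype
      B.toSubmodule.subtype).compr₂ N.toSubmodule.mkQ
  have hf_zero (x : A) (y : B) : f x y = 0 ↔ ⁅(x : E), (y : E)⁆ ∈ N :=
    Submodule.Quotient.mk_eq_zero _
  obtain ⟨T, hT⟩ := exists_tensorProduct_lift_of_ker_le f hp hq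
    (fun x hx => LinearMap.ext fun y => (hf_zero x y).2 (hpN x hx y))
    (fun y hy => LinearMap.ext fun x => (hf_zero x y).2 (hqN y hy x))
  refine relRank_le_rank T ?_
  rw [Submodule.map_le_iff_le_comap, lie_toSubmodule_le_iff]
  intro x hx y hy
  exact ⟨p ⟨x, hx⟩ ⊗ₜ q ⟨y, hy⟩, hT _ _⟩

theorem hopfRank_ker_le_rank_tensorProduct {Q : Type u} [LieRing Q] [LieAlgebra K Q]
    {σ : E →ₗ⁅K⁆ Q} (hσ : Function.Surjective σ) :
    hopfRank σ.ker ≤ Module.rank K (Q ⊗[K] Q) := by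
  let p : (⊤ : LieIdeal K E) →ₗ[K] Q := (σ : E →ₗ[K] Q) ∘ₗ (⊤ : LieIdeal K E).toSubmodule.subtype
  have hp : Function.Surjective p := fun z =>
    (hσ z).imp' (fun x => ⟨x, LieSubmodule.mem_top x⟩) fun _ => id
  have hp_left (x : (⊤ : LieIdeal K E)) (hx : p x = 0) (y : (⊤ : LieIdeal K E)) :
      ⁅(x : E), (y : E)⁆ ∈ ⁅σ.ker, (⊤ : LieIdeal K E)⁆ := LieSubmodule.lie_mem_lie hx y.2
  have hp_right (y : (⊤ : LieIdeal K E)) (hy : p y = 0) (x : (⊤ : LieIdeal K E)) :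
      ⁅(x : E), (y : E)⁆ ∈ ⁅σ.ker, (⊤ : LieIdeal K E)⁆ := by
    rw [LieSubmodule.lie_comm]
    exact LieSubmodule.lie_mem_lie x.2 hy
  calc hopfRank σ.ker
      ≤ relRank (⁅σ.ker, (⊤ : LieIdeal K E)⁆ : LieIdeal K E).toSubmodule
          (lowerCentralSeries K E E 1).toSubmodule :=
        relRank_le_relRank_of_le_map_sup LinearMap.id le_rfl
          (by rw [Submodule.map_id]; exact le_sup_of_le_left inf_le_right)
    _ ≤ Module.rank K (Q ⊗[K] Q) := relRank_lie_le_rank_tensorProduct hp hp hp_left hp_right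

theorem hopfRank_ker_lt_aleph0 {Q : Type u} [LieRing Q] [LieAlgebra K Q] [FiniteDimensional K Q]
    {σ : E →ₗ⁅K⁆ Q} (hσ : Function.Surjective σ) : hopfRank σ.ker < Cardinal.aleph0 :=
  (hopfRank_ker_le_rank_tensorProduct hσ).trans_lt (rank_lt_aleph0 K _)

end HopfRank

section CentralExtension

open LieModule

variable {K : Type*} {E : Type u} [Field K] [LieRing E] [LieAlgebra K E] {R S : LieIdeal K E}

theorem relRank_lie_self_sup_le_hopfRank_comap_incl (hSS : ⁅S, S⁆ ≤ R) :
    relRank (⁅R, (⊤ : LieIdeal K E)⁆ : LieIdeal K E).toSubmodule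
      (⁅S, S⁆ ⊔ ⁅R, (⊤ : LieIdeal K E)⁆ : LieIdeal K E).toSubmodule ≤
        hopfRank (R.comap S.incl) := by
  refine relRank_le_relRank_of_le_map_sup (S.incl : S →ₗ[K] E) ?_ ?_
  · exact lie_toSubmodule_le_iff.2 fun x hx y _ =>
      LieSubmodule.lie_mem_lie hx (LieSubmodule.mem_top (y : E))
  · rw [LieSubmodule.sup_toSubmodule]
    refine sup_le_sup_right (lie_toSubmodule_le_iff.2 fun x hx y hy => ?_) _
    exact ⟨⁅(⟨x, hx⟩ : S), (⟨y, hy⟩ : S)⁆, ⟨hSS (LieSubmodule.lie_mem_lie hx hy),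
      LieSubmodule.lie_mem_lie (LieSubmodule.mem_top _) (LieSubmodule.mem_top _)⟩, rfl⟩

theorem relRank_lie_top_le_hopfRank_comap_incl_add (hRS : R ≤ S)
    (hSR : ⁅S, (⊤ : LieIdeal K E)⁆ ≤ R) :
    relRank (⁅R, (⊤ : LieIdeal K E)⁆ : LieIdeal K E).toSubmodule
        (⁅S, (⊤ : LieIdeal K E)⁆ : LieIdeal K E).toSubmodule ≤
      hopfRank (R.comap S.incl) +
        relRank (⁅S, S⁆ ⊔ ⁅R, (⊤ : LieIdeal K E)⁆ : LieIdeal K E).toSubmodule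
          (⁅S, (⊤ : LieIdeal K E)⁆ : LieIdeal K E).toSubmodule := by
  have hSS : ⁅S, S⁆ ≤ ⁅S, (⊤ : LieIdeal K E)⁆ := LieSubmodule.mono_lie_right _ le_top
  have hR : ⁅R, (⊤ : LieIdeal K E)⁆ ≤ ⁅S, S⁆ ⊔ ⁅R, (⊤ : LieIdeal K E)⁆ := le_sup_right
  have hS : ⁅S, S⁆ ⊔ ⁅R, (⊤ : LieIdeal K E)⁆ ≤ ⁅S, (⊤ : LieIdeal K E)⁆ :=
    sup_le hSS (LieSubmodule.mono_lie_left _ hRS)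
  rw [← relRank_add_relRank (B := (⁅S, S⁆ ⊔ ⁅R, (⊤ : LieIdeal K E)⁆ : LieIdeal K E).toSubmodule)
    hR hS]
  gcongr
  exact relRank_lie_self_sup_le_hopfRank_comap_incl (hSS.trans hSR)

theorem hopfRank_add_relRank_inf_eq (hRS : R ≤ S) :
    hopfRank R + relRank (R ⊓ lowerCentralSeries K E E 1 : LieIdeal K E).toSubmodule
        (S ⊓ lowerCentralSeries K E E 1 : LieIdeal K E).toSubmodule =
      relRank (⁅R, (⊤ : LieIdeal K E)⁆ : LieIdeal K E).toSubmodule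
        (⁅S, (⊤ : LieIdeal K E)⁆ : LieIdeal K E).toSubmodule + hopfRank S := by
  have hle (J : LieIdeal K E) : ⁅J, (⊤ : LieIdeal K E)⁆ ≤ J ⊓ lowerCentralSeries K E E 1 :=
    le_inf (LieSubmodule.lie_le_left _ _) (LieSubmodule.mono_lie_left _ le_top)
  have hinf : R ⊓ lowerCentralSeries K E E 1 ≤ S ⊓ lowerCentralSeries K E E 1 :=
    inf_le_inf_right _ hRS
  rw [hopfRank, relRank_add_relRank (hle R) hinf, hopfRank,
    relRank_add_relRank (LieSubmodule.mono_lie_left _ hRS) (hle S)]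

variable {L : Type u} [LieRing L] [LieAlgebra K L]

theorem rank_lowerCentralSeries_one_inf_eq_relRank {π : E →ₗ⁅K⁆ L} (hπ : Function.Surjective π)
    (I : LieIdeal K L) :
    Module.rank K ↥((lowerCentralSeries K L L 1).toSubmodule ⊓ I.toSubmodule) =
      relRank (π.ker ⊓ lowerCentralSeries K E E 1 : LieIdeal K E).toSubmodule
        (I.comap π ⊓ lowerCentralSeries K E E 1 : LieIdeal K E).toSubmodule := by
  rw [← map_comap_inf_lowerCentralSeries_one hπ]
  refine rank_map_eq_relRank _ ?_
  rw [← LieHom.ker_toSubmodule, LieSubmodule.inf_toSubmodule, LieSubmodule.inf_toSubmodule]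
  ext x
  simp only [Submodule.mem_inf]
  tauto

theorem relRank_lie_top_le_rank_abelianization_tensorProduct {π : E →ₗ⁅K⁆ L}
    (hπ : Function.Surjective π) {I : LieIdeal K L} (hI : I ≤ LieAlgebra.center K L) :
    relRank (⁅I.comap π, I.comap π⁆ ⊔ ⁅π.ker, (⊤ : LieIdeal K E)⁆ : LieIdeal K E).toSubmodule
        (⁅I.comap π, (⊤ : LieIdeal K E)⁆ : LieIdeal K E).toSubmodule ≤
      Module.rank K (((L ⧸ I) ⧸ (lowerCentralSeries K (L ⧸ I) (L ⧸ I) 1).toSubmodule) ⊗[K] I) := by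
  let κ : E →ₗ⁅K⁆ L ⧸ I := (quotientLieHom I).comp π
  have hκ : Function.Surjective κ := (quotientLieHom_surjective I).comp hπ
  let p : (⊤ : LieIdeal K E) →ₗ[K]
      (L ⧸ I) ⧸ (lowerCentralSeries K (L ⧸ I) (L ⧸ I) 1).toSubmodule :=
    Submodule.mkQ _ ∘ₗ (κ : E →ₗ[K] L ⧸ I) ∘ₗ (⊤ : LieIdeal K E).toSubmodule.subtype
  have hp : Function.Surjective p := (Submodule.mkQ_surjective _).comp fun z =>
    (hκ z).imp' (fun x => ⟨x, LieSubmodule.mem_top x⟩) fun _ => id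
  have hp_ker (x : (⊤ : LieIdeal K E)) (hx : p x = 0) :
      (x : E) ∈ (lowerCentralSeries K E E 1 ⊔ I.comap π : LieIdeal K E) := by
    rw [← ker_quotientLieHom_comp, ← comap_lowerCentralSeries_one_eq_sup_ker hκ]
    exact (Submodule.Quotient.mk_eq_zero (lowerCentralSeries K (L ⧸ I) (L ⧸ I) 1).toSubmodule).1 hx
  rw [LieSubmodule.lie_comm (I.comap π) ⊤]
  refine relRank_lie_le_rank_tensorProduct hp (comapRestrict_surjective hπ I) ?_ ?_
    (q := (comapRestrict π I : I.comap π →ₗ[K] I))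
  · intro x hx y
    exact lie_lowerCentralSeries_one_sup_le (lie_comap_top_le_ker_of_le_center π hI)
      (LieSubmodule.lie_mem_lie (hp_ker x hx) y.2)
  · intro y hy x
    rw [LieSubmodule.lie_comm π.ker]
    exact LieSubmodule.mem_sup_right (LieSubmodule.lie_mem_lie x.2 (Subtype.ext_iff.1 hy))

theorem schur_multiplier_central_ideal_bound_general {K E L Y Z : Type u} [Field K]
    [LieRing E] [LieAlgebra K E] [LieRing L] [LieAlgebra K L] {I : LieIdeal K L}
    (hI : I ≤ LieAlgebra.center K L) {π : E →ₗ⁅K⁆ L} {ρ : FreeLieAlgebra K Y →ₗ⁅K⁆ L ⧸ I}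
    {τ : FreeLieAlgebra K Z →ₗ⁅K⁆ I} (hπ : Function.Surjective π) (hρ : Function.Surjective ρ)
    (hτ : Function.Surjective τ) :
    hopfRank π.ker +
        Module.rank K ↥((lowerCentralSeries K L L 1).toSubmodule ⊓ I.toSubmodule) ≤
      hopfRank ρ.ker + hopfRank τ.ker + Module.rank K
        (((L ⧸ I) ⧸ (lowerCentralSeries K (L ⧸ I) (L ⧸ I) 1).toSubmodule) ⊗[K] I) := by
  have hRS : π.ker ≤ I.comap π := LieHom.ker_le_comap π I
  have hSR : ⁅I.comap π, (⊤ : LieIdeal K E)⁆ ≤ π.ker := lie_comap_top_le_ker_of_le_center π hI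
  have hquotient : hopfRank (I.comap π) ≤ hopfRank ρ.ker := by
    rw [← ker_quotientLieHom_comp]
    exact hopfRank_ker_le_hopfRank_ker_of_free hρ ((quotientLieHom_surjective I).comp hπ)
  have hideal : hopfRank (π.ker.comap (I.comap π).incl) ≤ hopfRank τ.ker := by
    rw [← ker_comapRestrict]
    exact hopfRank_ker_le_hopfRank_ker_of_free hτ (comapRestrict_surjective hπ I)
  rw [rank_lowerCentralSeries_one_inf_eq_relRank hπ, hopfRank_add_relRank_inf_eq hRS, add_comm,
    add_assoc]
  gcongr
  refine (relRank_lie_top_le_hopfRank_comap_incl_add hRS hSR).trans ?_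
  gcongr
  exact relRank_lie_top_le_rank_abelianization_tensorProduct hπ hI

end CentralExtension

theorem natCast_lieSchurMultiplierDim {K X L : Type} [Field K] [LieRing L] [LieAlgebra K L]
    [FiniteDimensional K L] {π : FreeLieAlgebra K X →ₗ⁅K⁆ L} (hπ : Function.Surjective π) :
    (lieSchurMultiplierDim K X π : Cardinal) = hopfRank π.ker :=
  Cardinal.cast_toNat_of_lt_aleph0 (hopfRank_ker_lt_aleph0 hπ)

/-- for a central ideal `I` of a finite-dimensional Lie algebra `L`,
`dim M(L) + dim(L² ∩ I) ≤ dim M(L/I) + dim M(I) + dim((L/I)^{ab} ⊗ I)`. -/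
theorem schur_multiplier_central_ideal_bound (K L : Type) [Field K] [LieRing L]
    [LieAlgebra K L] [FiniteDimensional K L]
    (I : LieIdeal K L) (hc : I ≤ LieAlgebra.center K L) :
    ∀ (X Y Z : Type) (π : FreeLieAlgebra K X →ₗ⁅K⁆ L)
      (ρ : FreeLieAlgebra K Y →ₗ⁅K⁆ (L ⧸ I)) (τ : FreeLieAlgebra K Z →ₗ⁅K⁆ ↥I),
      Function.Surjective π → Function.Surjective ρ → Function.Surjective τ →
      lieSchurMultiplierDim K X π
          + Module.finrank K
            ↥(((LieModule.lowerCentralSeries K L L 1 : LieSubmodule K L L) : Submodule K L)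
                ⊓ (I : Submodule K L)) ≤
        lieSchurMultiplierDim K Y ρ + lieSchurMultiplierDim K Z τ
          + Module.finrank K
            (((L ⧸ I) ⧸ ((LieModule.lowerCentralSeries K (L ⧸ I) (L ⧸ I) 1 :
                LieSubmodule K (L ⧸ I) (L ⧸ I)) : Submodule K (L ⧸ I)))
              ⊗[K] ↥I) := by
  intro X Y Z π ρ τ hπ hρ hτ
  have : FiniteDimensional K (L ⧸ I) := Module.Finite.quotient K I.toSubmodule
  rw [← Nat.cast_le (α := Cardinal.{0})]
  push_cast
  rw [natCast_lieSchurMultiplierDim hπ, natCast_lieSchurMultiplierDim hρ,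
    natCast_lieSchurMultiplierDim hτ, finrank_eq_rank, finrank_eq_rank]
  exact schur_multiplier_central_ideal_bound_general hc hπ hρ hτ
end

section
/- Let L be an n-dimensional nilpotent Lie algebra of nilpotency class two with dim L² = m. Then dim M(L) = (1/2)(n+m−2)(n−m−1) + 1 if and only if L is isomorphic to one of: H(1) ⊕ A(n−3), L_{5,8}, or L_{6,26}. -/
open Module

/-- `H(1) ⊕ A(k)`: the direct sum of the 3-dimensional Heisenberg Lie algebra `H(1)` and
the abelian Lie algebra `A(k)` of dimension `k`, given by the presentation with
generators `a₀, a₁, a₂, b₁, …, b_k`, relations `⁅a₀,a₁⁆ = a₂` and all other brackets of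
generators trivial. -/
noncomputable def heisenbergPlusAbelian (K : Type) [Field K] (k : ℕ) : Type :=
  let F := FreeLieAlgebra K (Fin 3 ⊕ Fin k)
  let x : Fin 3 ⊕ Fin k → F := FreeLieAlgebra.of K
  F ⧸ LieSubmodule.lieSpan K F
    (insert (⁅x (.inl 0), x (.inl 1)⁆ - x (.inl 2))
      {z | ∃ i j : Fin 3 ⊕ Fin k,
        ¬(i = .inl 0 ∧ j = .inl 1) ∧ ¬(i = .inl 1 ∧ j = .inl 0) ∧ z = ⁅x i, x j⁆})

noncomputable instance (K : Type) [Field K] (k : ℕ) :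
    LieRing (heisenbergPlusAbelian K k) := by
  unfold heisenbergPlusAbelian; infer_instance

noncomputable instance (K : Type) [Field K] (k : ℕ) :
    LieAlgebra K (heisenbergPlusAbelian K k) := by
  unfold heisenbergPlusAbelian; infer_instance

/-- `L_{5,8} = ⟨x₁,…,x₅ : [x₁,x₂] = x₄, [x₁,x₃] = x₅⟩`, all other brackets of
generators trivial. -/
noncomputable def lieL58 (K : Type) [Field K] : Type :=
  let F := FreeLieAlgebra K (Fin 5)
  let x : Fin 5 → F := FreeLieAlgebra.of K
  F ⧸ LieSubmodule.lieSpan K F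
    {⁅x 0, x 1⁆ - x 3, ⁅x 0, x 2⁆ - x 4, ⁅x 0, x 3⁆, ⁅x 0, x 4⁆, ⁅x 1, x 2⁆,
     ⁅x 1, x 3⁆, ⁅x 1, x 4⁆, ⁅x 2, x 3⁆, ⁅x 2, x 4⁆, ⁅x 3, x 4⁆}

noncomputable instance (K : Type) [Field K] : LieRing (lieL58 K) := by
  unfold lieL58; infer_instance
noncomputable instance (K : Type) [Field K] : LieAlgebra K (lieL58 K) := by
  unfold lieL58; infer_instance

/-- `L_{6,26} = ⟨x₁,…,x₆ : [x₁,x₂] = x₄, [x₁,x₃] = x₅, [x₂,x₃] = x₆⟩`, all other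
brackets of generators trivial. -/
noncomputable def lieL626 (K : Type) [Field K] : Type :=
  let F := FreeLieAlgebra K (Fin 6)
  let x : Fin 6 → F := FreeLieAlgebra.of K
  F ⧸ LieSubmodule.lieSpan K F
    {⁅x 0, x 1⁆ - x 3, ⁅x 0, x 2⁆ - x 4, ⁅x 1, x 2⁆ - x 5,
     ⁅x 0, x 3⁆, ⁅x 0, x 4⁆, ⁅x 0, x 5⁆, ⁅x 1, x 3⁆, ⁅x 1, x 4⁆, ⁅x 1, x 5⁆,
     ⁅x 2, x 3⁆, ⁅x 2, x 4⁆, ⁅x 2, x 5⁆, ⁅x 3, x 4⁆, ⁅x 3, x 5⁆, ⁅x 4, x 5⁆}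

noncomputable instance (K : Type) [Field K] : LieRing (lieL626 K) := by
  unfold lieL626; infer_instance
noncomputable instance (K : Type) [Field K] : LieAlgebra K (lieL626 K) := by
  unfold lieL626; infer_instance

/-!
By the Hopf formula, functionals on `F² / [R, F]` are the scalar 2-cocycles of `L = F / R`, because
a free Lie algebra has no second cohomology. Hence `dim M(L) + dim L²` is the dimension of the space
of 2-cocycles.

If `L` has class two and `V` is a complement of `W = L²`, the bracket is an alternating map
`ω : V × V → W`, and a cocycle amounts to an alternating form on `V` together with a pairing
`β : V × W → K` satisfying `β a (ω b c) + β b (ω c a) + β c (ω a b) = 0`. Fixing `v`, `w` with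
`ω v w ≠ 0` and letting `c` vary already imposes `dim V - 2` independent conditions on `β`. This
gives the upper bound on `dim M(L)`, and equality means that no further condition arises from other
pairs of vectors. This happens exactly when `dim V ≤ 3` or `V` is spanned by two vectors and the
radical of `ω`. In the second case `L ≃ H(1) ⊕ A(n - 3)`; if `dim V ≤ 3` and the second case fails,
then `dim V = 3` and `dim W` is `2` or `3`, which gives `L_{5,8}` and `L_{6,26}`.
-/

section AlternatingMap

variable {K V W : Type*} [Field K] [AddCommGroup V] [Module K V] [AddCommGroup W] [Module K W]

/-- The Jacobi sum `c ↦ β v (ω w c) + β w (ω c v) + β c (ω v w)` of a pairing `β` against a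
bilinear map `ω`, as a linear function of `β`. -/
def jacobiator (ω : V →ₗ[K] V →ₗ[K] W) (v w : V) : (V →ₗ[K] W →ₗ[K] K) →ₗ[K] V →ₗ[K] K where
  toFun β := β v ∘ₗ ω w + β w ∘ₗ ω.flip v + β.flip (ω v w)
  map_add' _ _ := by ext; simp; abel
  map_smul' _ _ := by ext; simp

/-- The pairings `V × W → K` whose Jacobi sums against `ω` all vanish. When `V ⊕ W` carries the
class-two bracket `⁅(v, _), (w, _)⁆ = (0, ω v w)`, these are the mixed components of the scalar
2-cocycles. -/
def jacobiPairings (ω : V →ₗ[K] V →ₗ[K] W) : Submodule K (V →ₗ[K] W →ₗ[K] K) :=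
  ⨅ v, ⨅ w, LinearMap.ker (jacobiator ω v w)

variable {ω : V →ₗ[K] V →ₗ[K] W} {v w : V}

theorem jacobiator_apply (β : V →ₗ[K] W →ₗ[K] K) (c : V) :
    jacobiator ω v w β c = β v (ω w c) + β w (ω c v) + β c (ω v w) :=
  rfl

theorem mem_ker_jacobiator {β : V →ₗ[K] W →ₗ[K] K} :
    β ∈ LinearMap.ker (jacobiator ω v w) ↔
      ∀ c, β v (ω w c) + β w (ω c v) + β c (ω v w) = 0 :=
  LinearMap.ext_iff

theorem mem_jacobiPairings {β : V →ₗ[K] W →ₗ[K] K} :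
    β ∈ jacobiPairings ω ↔ ∀ a b c, β a (ω b c) + β b (ω c a) + β c (ω a b) = 0 := by
  simp only [jacobiPairings, Submodule.mem_iInf, mem_ker_jacobiator]

theorem jacobiPairings_le_ker (v w : V) :
    jacobiPairings ω ≤ LinearMap.ker (jacobiator ω v w) :=
  fun _ hβ => mem_ker_jacobiator.2 (mem_jacobiPairings.1 hβ v w)

theorem exists_dual_apply_eq_one_of_notMem {p : Submodule K V} (hv : v ∉ p) :
    ∃ f : Dual K V, f v = 1 ∧ ∀ y ∈ p, f y = 0 := by
  obtain ⟨f, hf, hp⟩ := Submodule.exists_le_ker_of_notMem hv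
  exact ⟨(f v)⁻¹ • f, by simp [hf], fun y hy => by simp [LinearMap.mem_ker.1 (hp hy)]⟩

theorem exists_dual_apply_eq_one (hv : v ≠ 0) : ∃ f : Dual K V, f v = 1 :=
  (exists_dual_apply_eq_one_of_notMem (p := ⊥) hv).imp fun _ hf => hf.1

theorem range_jacobiator (hω : ω.IsAlt) (h : ω v w ≠ 0) :
    LinearMap.range (jacobiator ω v w) = (Submodule.span K {v, w}).dualAnnihilator := by
  apply le_antisymm
  · rintro _ ⟨β, rfl⟩
    have hker : Submodule.span K {v, w} ≤ LinearMap.ker (jacobiator ω v w β) := by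
      rw [Submodule.span_le, Set.pair_subset_iff]
      constructor <;> simp [jacobiator_apply, hω.self_eq_zero, ← hω.neg v w]
    exact (Submodule.mem_dualAnnihilator _).2 fun x hx => hker hx
  · intro g hg
    rw [Submodule.mem_dualAnnihilator] at hg
    have hgv : g v = 0 := hg v (Submodule.subset_span (by simp))
    have hgw : g w = 0 := hg w (Submodule.subset_span (by simp))
    obtain ⟨f, hf⟩ := exists_dual_apply_eq_one (K := K) h
    exact ⟨g.smulRight f, by ext c; simp [jacobiator_apply, hgv, hgw, hf]⟩

theorem exists_apply_ne_zero (h0 : ω ≠ 0) : ∃ v w, ω v w ≠ 0 := by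
  contrapose! h0
  exact LinearMap.ext₂ h0

theorem finrank_span_pair (h : LinearIndependent K ![v, w]) :
    finrank K (Submodule.span K {v, w}) = 2 := by
  rw [← Matrix.range_cons_cons_empty v w ![], finrank_span_eq_card h, Fintype.card_fin]

theorem linearIndependent_pair_of_apply_ne_zero (hω : ω.IsAlt) (h : ω v w ≠ 0) :
    LinearIndependent K ![v, w] := by
  refine LinearIndependent.pair_iff.2 fun s t hst => ⟨?_, ?_⟩
  · have hs : s • ω v w = 0 := by simpa [hω.self_eq_zero] using congrArg (ω · w) hst
    exact (smul_eq_zero.1 hs).resolve_right h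
  · have ht : t • ω v w = 0 := by simpa [hω.self_eq_zero] using congrArg (ω v) hst
    exact (smul_eq_zero.1 ht).resolve_right h

theorem finrank_span_pair_of_apply_ne_zero (hω : ω.IsAlt) (h : ω v w ≠ 0) :
    finrank K (Submodule.span K {v, w}) = 2 :=
  finrank_span_pair (linearIndependent_pair_of_apply_ne_zero hω h)

theorem ker_jacobiator_le_of_span_triple_eq_top (hω : ω.IsAlt) {u : V}
    (hspan : Submodule.span K {u, v, w} = ⊤) :
    LinearMap.ker (jacobiator ω v w) ≤ jacobiPairings ω := by
  intro β hβ
  have hβu := mem_ker_jacobiator.1 hβ u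
  have coords (x : V) : ∃ r s t : K, r • u + s • v + t • w = x :=
    Submodule.mem_span_triple.1 (hspan ▸ Submodule.mem_top)
  refine mem_jacobiPairings.2 fun a b c => ?_
  obtain ⟨a₀, a₁, a₂, rfl⟩ := coords a
  obtain ⟨b₀, b₁, b₂, rfl⟩ := coords b
  obtain ⟨c₀, c₁, c₂, rfl⟩ := coords c
  simp only [map_add, map_smul, LinearMap.add_apply, LinearMap.smul_apply, hω.self_eq_zero,
    ← hω.neg v w, ← hω.neg u v, ← hω.neg w u, smul_eq_mul, smul_zero, map_neg, map_zero] at hβu ⊢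
  linear_combination (a₀ * (b₁ * c₂ - b₂ * c₁) - a₁ * (b₀ * c₂ - b₂ * c₀)
    + a₂ * (b₀ * c₁ - b₁ * c₀)) * hβu

theorem exists_eq_smul_add_smul_add_of_sup_ker_eq_top
    (hspan : Submodule.span K {v, w} ⊔ LinearMap.ker ω = ⊤) (x : V) :
    ∃ r s : K, ∃ y ∈ LinearMap.ker ω, r • v + s • w + y = x := by
  obtain ⟨z, hz, y, hy, rfl⟩ := Submodule.mem_sup.1 (hspan ▸ Submodule.mem_top : x ∈ _)
  obtain ⟨r, s, rfl⟩ := Submodule.mem_span_pair.1 hz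
  exact ⟨r, s, y, hy, rfl⟩

theorem apply_eq_zero_of_right_mem_ker (hω : ω.IsAlt) {y : V} (hy : y ∈ LinearMap.ker ω) (x : V) :
    ω x y = 0 := by
  rw [← hω.neg, LinearMap.mem_ker.1 hy, LinearMap.zero_apply, neg_zero]

theorem apply_mem_span_of_span_pair_sup_ker_eq_top (hω : ω.IsAlt)
    (hspan : Submodule.span K {v, w} ⊔ LinearMap.ker ω = ⊤) (x y : V) :
    ω x y ∈ Submodule.span K {ω v w} := by
  obtain ⟨a, b, x', hx', rfl⟩ := exists_eq_smul_add_smul_add_of_sup_ker_eq_top hspan x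
  obtain ⟨c, d, y', hy', rfl⟩ := exists_eq_smul_add_smul_add_of_sup_ker_eq_top hspan y
  refine Submodule.mem_span_singleton.2 ⟨a * d - b * c, ?_⟩
  simp only [map_add, map_smul, LinearMap.add_apply, LinearMap.smul_apply, hω.self_eq_zero,
    ← hω.neg v w, LinearMap.mem_ker.1 hx', apply_eq_zero_of_right_mem_ker hω hy',
    LinearMap.zero_apply]
  module

theorem apply_ne_zero_of_span_pair_sup_ker_eq_top (hω : ω.IsAlt) (h0 : ω ≠ 0)
    (hspan : Submodule.span K {v, w} ⊔ LinearMap.ker ω = ⊤) : ω v w ≠ 0 := by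
  contrapose! h0
  refine LinearMap.ext₂ fun x y => ?_
  simpa [h0] using apply_mem_span_of_span_pair_sup_ker_eq_top hω hspan x y

theorem ker_jacobiator_le_of_span_pair_sup_ker_eq_top (hω : ω.IsAlt)
    (hspan : Submodule.span K {v, w} ⊔ LinearMap.ker ω = ⊤) :
    LinearMap.ker (jacobiator ω v w) ≤ jacobiPairings ω := by
  intro β hβ
  have hβy {y : V} (hy : y ∈ LinearMap.ker ω) : β y (ω v w) = 0 := by
    simpa [apply_eq_zero_of_right_mem_ker hω hy, LinearMap.mem_ker.1 hy] using
      mem_ker_jacobiator.1 hβ y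
  refine mem_jacobiPairings.2 fun a b c => ?_
  obtain ⟨a₀, a₁, y, hy, rfl⟩ := exists_eq_smul_add_smul_add_of_sup_ker_eq_top hspan a
  obtain ⟨b₀, b₁, z, hz, rfl⟩ := exists_eq_smul_add_smul_add_of_sup_ker_eq_top hspan b
  obtain ⟨c₀, c₁, t, ht, rfl⟩ := exists_eq_smul_add_smul_add_of_sup_ker_eq_top hspan c
  simp only [map_add, map_smul, LinearMap.add_apply, LinearMap.smul_apply, hω.self_eq_zero,
    ← hω.neg v w, smul_eq_mul, smul_zero, map_neg, LinearMap.mem_ker.1 hy, LinearMap.mem_ker.1 hz,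
    LinearMap.mem_ker.1 ht, apply_eq_zero_of_right_mem_ker hω hy,
    apply_eq_zero_of_right_mem_ker hω hz, apply_eq_zero_of_right_mem_ker hω ht,
    add_zero, zero_add, hβy hy, hβy hz, hβy ht]
  ring

theorem exists_notMem_span_triple (hV : 4 ≤ finrank K V) (x y z : V) :
    ∃ c, c ∉ Submodule.span K {x, y, z} := by
  classical
  by_contra! hall
  have htop : Submodule.span K {x, y, z} = ⊤ := (Submodule.eq_top_iff').2 hall
  have hle := finrank_span_finset_le_card (R := K) ({x, y, z} : Finset V)
  rw [Finset.coe_insert, Finset.coe_pair, Set.finrank, htop, finrank_top] at hle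
  have hcard : ({x, y, z} : Finset V).card ≤ 3 := Finset.card_le_three
  omega

/-- If `ω v b` were not proportional to `ω v w`, the pairing `g ⊗ f`, with `g` vanishing on `v`,
`w`, `b` and `f` separating `ω v b` from `ω v w`, would violate the Jacobi identity. -/
theorem apply_mem_span_of_ker_jacobiator_le (hV : 4 ≤ finrank K V)
    (hker : LinearMap.ker (jacobiator ω v w) ≤ jacobiPairings ω) (b : V) :
    ω v b ∈ Submodule.span K {ω v w} := by
  by_contra hb
  obtain ⟨f, hfb, hfw⟩ := exists_dual_apply_eq_one_of_notMem hb
  obtain ⟨c, hc⟩ := exists_notMem_span_triple hV v w b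
  obtain ⟨g, hgc, hg⟩ := exists_dual_apply_eq_one_of_notMem hc
  have hgv : g v = 0 := hg v (Submodule.subset_span (by simp))
  have hgw : g w = 0 := hg w (Submodule.subset_span (by simp))
  have hgb : g b = 0 := hg b (Submodule.subset_span (by simp))
  have hfvw : f (ω v w) = 0 := hfw _ (Submodule.mem_span_singleton_self _)
  have hmem : g.smulRight f ∈ LinearMap.ker (jacobiator ω v w) :=
    mem_ker_jacobiator.2 fun c => by simp [hgv, hgw, hfvw]
  have hjac := mem_jacobiPairings.1 (hker hmem) v b c
  simp [hgv, hgb, hgc, hfb] at hjac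

theorem apply_mem_span_of_forall_ker_jacobiator_le (hω : ω.IsAlt) (hV : 4 ≤ finrank K V)
    (hker : ∀ v w, ω v w ≠ 0 → LinearMap.ker (jacobiator ω v w) ≤ jacobiPairings ω)
    (h : ω v w ≠ 0) (b c : V) : ω b c ∈ Submodule.span K {ω v w} := by
  have snd {v w : V} (h : ω v w ≠ 0) (b : V) : ω w b ∈ Submodule.span K {ω v w} := by
    have h' : ω w v ≠ 0 := by rwa [← hω.neg, neg_ne_zero]
    have hmem := apply_mem_span_of_ker_jacobiator_le hV (hker w v h') b
    rwa [← hω.neg, ← Set.neg_singleton, Submodule.span_neg] at hmem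
  by_cases hb : ω v b = 0
  · have hwb : ω v (w + b) = ω v w := by rw [map_add, hb, add_zero]
    have hsum : ω (w + b) c ∈ Submodule.span K {ω v w} := hwb ▸ snd (hwb ▸ h) c
    simpa using Submodule.sub_mem _ hsum (snd h c)
  · exact Submodule.span_singleton_le_iff_mem _ _ |>.2
      (apply_mem_span_of_ker_jacobiator_le hV (hker v w h) b) (snd hb c)

/-- The test pairing is `β = -f(ω w ·) ⊗ f`, where `f` is the coordinate along `ω v w`. -/
theorem apply_eq_zero_of_ker_jacobiator_le (hω : ω.IsAlt) (h : ω v w ≠ 0)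
    (hrank : ∀ b c, ω b c ∈ Submodule.span K {ω v w})
    (hker : LinearMap.ker (jacobiator ω v w) ≤ jacobiPairings ω) {b c : V}
    (hvb : ω v b = 0) (hwb : ω w b = 0) (hwc : ω w c = 0) : ω b c = 0 := by
  obtain ⟨f, hf⟩ := exists_dual_apply_eq_one (K := K) h
  have hmem : (-(f ∘ₗ ω w)).smulRight f ∈ LinearMap.ker (jacobiator ω v w) :=
    mem_ker_jacobiator.2 fun c => by simp [hf, hω.self_eq_zero, ← hω.neg v w]
  have hjac := mem_jacobiPairings.1 (hker hmem) v b c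
  obtain ⟨t, ht⟩ := Submodule.mem_span_singleton.1 (hrank b c)
  have ht0 : t = 0 := by simpa [hf, hwb, hwc, hvb, ← hω.neg v w, ← ht] using hjac
  rw [← ht, ht0, zero_smul]

theorem span_pair_sup_ker_eq_top_of_ker_jacobiator_le (hω : ω.IsAlt) (h : ω v w ≠ 0)
    (hrank : ∀ b c, ω b c ∈ Submodule.span K {ω v w})
    (hker : LinearMap.ker (jacobiator ω v w) ≤ jacobiPairings ω) :
    Submodule.span K {v, w} ⊔ LinearMap.ker ω = ⊤ := by
  have residual (x : V) : ∃ r s : K, ω v (x - (r • v + s • w)) = 0 ∧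
      ω w (x - (r • v + s • w)) = 0 := by
    obtain ⟨s, hs⟩ := Submodule.mem_span_singleton.1 (hrank v x)
    obtain ⟨r, hr⟩ := Submodule.mem_span_singleton.1 (hrank w x)
    exact ⟨-r, s, by simp [hω.self_eq_zero, hs], by simp [hω.self_eq_zero, ← hω.neg v w, hr]⟩
  refine (Submodule.eq_top_iff').2 fun x => ?_
  obtain ⟨r, s, hvx, hwx⟩ := residual x
  refine Submodule.mem_sup.2 ⟨r • v + s • w, Submodule.mem_span_pair.2 ⟨r, s, rfl⟩,
    x - (r • v + s • w), LinearMap.ext fun y => ?_, add_sub_cancel _ _⟩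
  obtain ⟨r', s', -, hwy⟩ := residual y
  rw [← add_sub_cancel (r' • v + s' • w) y, map_add,
    apply_eq_zero_of_ker_jacobiator_le hω h hrank hker hvx hwx hwy, map_add, map_smul, map_smul,
    ← hω.neg v, ← hω.neg w, hvx, hwx]
  simp

variable [FiniteDimensional K V]

theorem exists_span_insert_pair_eq_top (hV : finrank K V ≤ 3)
    (hvw : finrank K (Submodule.span K {v, w}) = 2) :
    ∃ u, Submodule.span K {u, v, w} = ⊤ := by
  by_cases htop : Submodule.span K {v, w} = ⊤
  · exact ⟨v, by simpa using htop⟩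
  · obtain ⟨u, -, hu⟩ := SetLike.exists_of_lt (lt_top_iff_ne_top.2 htop)
    have hlt : Submodule.span K {v, w} < Submodule.span K {u, v, w} :=
      SetLike.lt_iff_le_and_exists.2
        ⟨Submodule.span_mono (by simp), u, Submodule.subset_span (by simp), hu⟩
    have := Submodule.finrank_lt_finrank_of_lt hlt
    exact ⟨u, Submodule.eq_top_of_finrank_eq (le_antisymm (Submodule.finrank_le _) (by omega))⟩

theorem finrank_ker_add_two_of_span_pair_sup_ker_eq_top (hω : ω.IsAlt) (h0 : ω ≠ 0)
    (hspan : Submodule.span K {v, w} ⊔ LinearMap.ker ω = ⊤) :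
    finrank K (LinearMap.ker ω) + 2 = finrank K V := by
  have h : ω v w ≠ 0 := apply_ne_zero_of_span_pair_sup_ker_eq_top hω h0 hspan
  have hdisj : Submodule.span K {v, w} ⊓ LinearMap.ker ω = ⊥ := by
    rw [← disjoint_iff, Submodule.disjoint_def]
    intro x hx hker
    obtain ⟨r, t, rfl⟩ := Submodule.mem_span_pair.1 hx
    have hr : r = 0 := by
      simpa [hω.self_eq_zero, h] using LinearMap.congr_fun (LinearMap.mem_ker.1 hker) w
    have ht : t = 0 := by
      simpa [hω.self_eq_zero, h] using apply_eq_zero_of_right_mem_ker hω hker v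
    rw [hr, ht, zero_smul, zero_smul, add_zero]
  have hdim := Submodule.finrank_sup_add_finrank_inf_eq (Submodule.span K {v, w}) (LinearMap.ker ω)
  rw [hspan, hdisj, finrank_top, finrank_bot, finrank_span_pair_of_apply_ne_zero hω h] at hdim
  omega

theorem span_pair_sup_ker_eq_top_of_finrank_le_three (hω : ω.IsAlt) (h : ω v w ≠ 0)
    (hrank : ∀ x y, ω x y ∈ Submodule.span K {ω v w}) (hV : finrank K V ≤ 3) :
    Submodule.span K {v, w} ⊔ LinearMap.ker ω = ⊤ := by
  obtain ⟨u, hu⟩ := exists_span_insert_pair_eq_top hV (finrank_span_pair_of_apply_ne_zero hω h)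
  exact span_pair_sup_ker_eq_top_of_ker_jacobiator_le hω h hrank
    (ker_jacobiator_le_of_span_triple_eq_top hω hu)

theorem exists_ne_zero_mem_ker_of_finrank_eq_three {σ : V →ₗ[K] V →ₗ[K] K} (hσ : σ.IsAlt)
    (hV : finrank K V = 3) : ∃ z ≠ 0, z ∈ LinearMap.ker σ := by
  by_cases h0 : σ = 0
  · have : Nontrivial V := nontrivial_of_finrank_pos (R := K) (by omega)
    simpa [h0] using exists_ne (0 : V)
  · obtain ⟨v, w, h⟩ := exists_apply_ne_zero h0
    have hspan := span_pair_sup_ker_eq_top_of_finrank_le_three hσ h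
      (fun x y => Submodule.mem_span_singleton.2 ⟨σ x y / σ v w, div_mul_cancel₀ _ h⟩) hV.le
    have hker := finrank_ker_add_two_of_span_pair_sup_ker_eq_top hσ h0 hspan
    have hbot : LinearMap.ker σ ≠ ⊥ := by
      rw [← Submodule.one_le_finrank_iff]
      omega
    obtain ⟨z, hz, hz0⟩ := Submodule.exists_mem_ne_zero_of_ne_bot hbot
    exact ⟨z, hz0, hz⟩

variable [FiniteDimensional K W]

/-- If `f ≠ 0` is a functional on `W` and `a` lies in the radical of `f ∘ ω`, then `ω a` has rank at
most one. -/
theorem exists_linearIndependent_pair_apply_eq_zero (hω : ω.IsAlt) (hV : finrank K V = 3)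
    (hW : finrank K W = 2) : ∃ a b, LinearIndependent K ![a, b] ∧ ω a b = 0 := by
  have : Nontrivial W := nontrivial_of_finrank_pos (R := K) (by omega)
  obtain ⟨y, hy⟩ := exists_ne (0 : W)
  obtain ⟨f, hf⟩ := exists_dual_apply_eq_one (K := K) hy
  obtain ⟨a, ha0, ha⟩ := exists_ne_zero_mem_ker_of_finrank_eq_three
    (σ := ω.compr₂ f) (fun x => by simp [hω.self_eq_zero]) hV
  have hrange : LinearMap.range (ω a) < ⊤ := by
    refine lt_top_iff_ne_top.2 fun htop => ?_
    obtain ⟨x, rfl⟩ := LinearMap.range_eq_top.1 htop y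
    exact zero_ne_one ((LinearMap.congr_fun (LinearMap.mem_ker.1 ha) x).symm.trans hf)
  have hker : ¬ LinearMap.ker (ω a) ≤ Submodule.span K {a} := fun hle => by
    have h1 := (Submodule.finrank_mono hle).trans_eq (finrank_span_singleton ha0)
    have h2 := Submodule.finrank_lt hrange.ne
    have h3 := LinearMap.finrank_range_add_finrank_ker (ω a)
    omega
  obtain ⟨b, hb, hab⟩ := SetLike.not_le_iff_exists.1 hker
  refine ⟨a, b, (LinearIndependent.pair_iff' ha0).2 fun t ht => ?_, hb⟩
  exact hab (Submodule.mem_span_singleton.2 ⟨t, ht⟩)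

theorem finrank_ker_jacobiator (hω : ω.IsAlt) (h : ω v w ≠ 0) :
    finrank K (LinearMap.ker (jacobiator ω v w)) + finrank K V =
      finrank K V * finrank K W + 2 := by
  have hranknullity := LinearMap.finrank_range_add_finrank_ker (V := V →ₗ[K] W →ₗ[K] K)
    (V₂ := V →ₗ[K] K) (jacobiator ω v w)
  have hrange : 2 + finrank K (LinearMap.range (jacobiator ω v w)) = finrank K V := by
    rw [range_jacobiator hω h, ← finrank_span_pair_of_apply_ne_zero hω h,
      Subspace.finrank_add_finrank_dualAnnihilator_eq]
  have hpairings : finrank K (V →ₗ[K] W →ₗ[K] K) = finrank K V * finrank K W := by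
    rw [finrank_linearMap, finrank_linearMap, finrank_self, mul_one]
  omega

theorem finrank_jacobiPairings_eq_iff_ker_le (hω : ω.IsAlt) (h : ω v w ≠ 0) :
    finrank K (jacobiPairings ω) + finrank K V = finrank K V * finrank K W + 2 ↔
      LinearMap.ker (jacobiator ω v w) ≤ jacobiPairings ω := by
  have hfinrank := finrank_ker_jacobiator hω h
  have hle := jacobiPairings_le_ker (ω := ω) v w
  constructor
  · intro hext
    have heq : finrank K (jacobiPairings ω) = finrank K (LinearMap.ker (jacobiator ω v w)) := by
      omega
    have hker : jacobiPairings ω = LinearMap.ker (jacobiator ω v w) :=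
      Submodule.eq_of_le_of_finrank_eq (K := K) (V := V →ₗ[K] W →ₗ[K] K) hle heq
    rw [hker]
  · intro hge
    rwa [le_antisymm hle hge]

theorem finrank_jacobiPairings_eq_iff (hω : ω.IsAlt) (h0 : ω ≠ 0) :
    finrank K (jacobiPairings ω) + finrank K V = finrank K V * finrank K W + 2 ↔
      finrank K V ≤ 3 ∨ ∃ v w, Submodule.span K {v, w} ⊔ LinearMap.ker ω = ⊤ := by
  obtain ⟨v, w, h⟩ := exists_apply_ne_zero h0
  constructor
  · intro hext
    have hker (v w : V) (h : ω v w ≠ 0) := (finrank_jacobiPairings_eq_iff_ker_le hω h).1 hext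
    refine (le_or_gt (finrank K V) 3).imp_right fun hV => ⟨v, w, ?_⟩
    exact span_pair_sup_ker_eq_top_of_ker_jacobiator_le hω h
      (apply_mem_span_of_forall_ker_jacobiator_le hω hV hker h) (hker v w h)
  · rintro (hV | ⟨v', w', hspan⟩)
    · obtain ⟨u, hu⟩ :=
        exists_span_insert_pair_eq_top hV (finrank_span_pair_of_apply_ne_zero hω h)
      exact (finrank_jacobiPairings_eq_iff_ker_le hω h).2
        (ker_jacobiator_le_of_span_triple_eq_top hω hu)
    · have h' : ω v' w' ≠ 0 := apply_ne_zero_of_span_pair_sup_ker_eq_top hω h0 hspan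
      exact (finrank_jacobiPairings_eq_iff_ker_le hω h').2
        (ker_jacobiator_le_of_span_pair_sup_ker_eq_top hω hspan)

end AlternatingMap

section HopfFormula

open LieModule LieModule.Cohomology

variable {K F L M : Type*} [Field K] [LieRing F] [LieAlgebra K F] [LieRing L] [LieAlgebra K L]
  [AddCommGroup M] [Module K M]

theorem lowerCentralSeries_one_eq_span :
    (lowerCentralSeries K F F 1).toSubmodule = Submodule.span K {z | ∃ a b : F, ⁅a, b⁆ = z} := by
  rw [lowerCentralSeries_succ, lowerCentralSeries_zero,
    LieSubmodule.lieIdeal_oper_eq_linear_span']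
  simp

theorem lie_mem_lowerCentralSeries_one (a b : F) : ⁅a, b⁆ ∈ lowerCentralSeries K F F 1 :=
  LieSubmodule.lie_mem_lie (LieSubmodule.mem_top a) (LieSubmodule.mem_top b)

variable (π : F →ₗ⁅K⁆ L)

/-- The quotient `F² / [ker π, F]`. Its subspace `(ker π ∩ F²) / [ker π, F]` is the Schur multiplier
of `L` when `F` is free and `π` is surjective. -/
abbrev commutatorQuotient : Type _ :=
  (lowerCentralSeries K F F 1).toSubmodule ⧸
    Submodule.comap (lowerCentralSeries K F F 1).toSubmodule.subtype
      (⁅π.ker, (⊤ : LieIdeal K F)⁆ : LieIdeal K F).toSubmodule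

/-- The class of a commutator `⁅a, b⁆` in `F² / [ker π, F]`, as a bilinear map. -/
def commutatorMk : F →ₗ[K] F →ₗ[K] commutatorQuotient π :=
  LinearMap.mk₂ K
    (fun a b => Submodule.Quotient.mk ⟨⁅a, b⁆, lie_mem_lowerCentralSeries_one a b⟩)
    (fun _ _ _ => congrArg Submodule.Quotient.mk (Subtype.ext (add_lie _ _ _)))
    (fun _ _ _ => congrArg Submodule.Quotient.mk (Subtype.ext (smul_lie _ _ _)))
    (fun _ _ _ => congrArg Submodule.Quotient.mk (Subtype.ext (lie_add _ _ _)))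
    (fun _ _ _ => congrArg Submodule.Quotient.mk (Subtype.ext (lie_smul _ _ _)))

variable {π}

theorem commutatorMk_isAlt : (commutatorMk π).IsAlt := fun a =>
  congrArg Submodule.Quotient.mk (Subtype.ext (lie_self a))

theorem commutatorMk_lie (a b c : F) :
    commutatorMk π a ⁅b, c⁆ = commutatorMk π ⁅a, b⁆ c + commutatorMk π b ⁅a, c⁆ :=
  congrArg Submodule.Quotient.mk (Subtype.ext (leibniz_lie a b c))

theorem commutatorMk_eq_zero_of_mem_ker {r : F} (hr : π r = 0) (a : F) :
    commutatorMk π r a = 0 :=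
  (Submodule.Quotient.mk_eq_zero _).2 (LieSubmodule.lie_mem_lie hr (LieSubmodule.mem_top a))

theorem commutatorMk_congr {a a' b b' : F} (ha : π a = π a') (hb : π b = π b') :
    commutatorMk π a b = commutatorMk π a' b' := by
  have hleft (c : F) : commutatorMk π a c = commutatorMk π a' c := by
    rw [← sub_eq_zero, ← LinearMap.sub_apply, ← map_sub]
    exact commutatorMk_eq_zero_of_mem_ker (by rw [map_sub, ha, sub_self]) c
  have hright : commutatorMk π b a' = commutatorMk π b' a' := by
    rw [← sub_eq_zero, ← LinearMap.sub_apply, ← map_sub]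
    exact commutatorMk_eq_zero_of_mem_ker (by rw [map_sub, hb, sub_self]) a'
  rw [hleft, ← commutatorMk_isAlt.neg, hright, commutatorMk_isAlt.neg]

theorem commutatorQuotient_hom_ext {f g : commutatorQuotient π →ₗ[K] M}
    (h : ∀ a b, f (commutatorMk π a b) = g (commutatorMk π a b)) : f = g := by
  refine Submodule.linearMap_qext _ (LinearMap.ext fun ⟨z, hz⟩ => ?_)
  let agree := LinearMap.eqLocus (f ∘ₗ Submodule.mkQ _) (g ∘ₗ Submodule.mkQ _)
  have hle : (lowerCentralSeries K F F 1).toSubmodule ≤ agree.map (Submodule.subtype _) := by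
    refine lowerCentralSeries_one_eq_span.trans_le (Submodule.span_le.2 ?_)
    rintro _ ⟨a, b, rfl⟩
    exact ⟨⟨⁅a, b⁆, lie_mem_lowerCentralSeries_one a b⟩, h a b, rfl⟩
  obtain ⟨_, hy, rfl⟩ := hle hz
  exact hy

theorem ker_lie_top_le_ker (φ : F →ₗ[K] M) {c : L →ₗ[K] L →ₗ[K] M}
    (hφ : ∀ a b, φ ⁅a, b⁆ = c (π a) (π b)) :
    (⁅π.ker, (⊤ : LieIdeal K F)⁆ : LieIdeal K F).toSubmodule ≤ LinearMap.ker φ := by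
  rw [LieSubmodule.lieIdeal_oper_eq_linear_span', Submodule.span_le]
  rintro _ ⟨r, hr, a, -, rfl⟩
  simp [hφ, LieHom.mem_ker.1 hr]

variable [LieRingModule L M] [LieModule K L M] [LieModule.IsTrivial L M]

/-- The cocycle `(x, y) ↦ f ⁅s x, s y⁆` attached to a linear functional `f` on `F² / [ker π, F]` and
a linear section `s` of `π`; it does not depend on `s`. -/
def commutatorCocycle (s : L →ₗ[K] F) (hs : ∀ x, π (s x) = x) :
    (commutatorQuotient π →ₗ[K] M) →ₗ[K] twoCocycle K L M where
  toFun f :=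
    ⟨⟨((commutatorMk π).compl₁₂ s s).compr₂ f, fun x => by simp [commutatorMk_isAlt (s x)]⟩,
      (mem_twoCocycle_iff_of_trivial K L M _).2 fun x y z => by
        change f (commutatorMk π (s x) (s ⁅y, z⁆)) = f (commutatorMk π (s ⁅x, y⁆) (s z)) +
          f (commutatorMk π (s y) (s ⁅x, z⁆))
        have hlie (x y : L) : π (s ⁅x, y⁆) = π ⁅s x, s y⁆ := by simp [hs]
        rw [commutatorMk_congr rfl (hlie y z), commutatorMk_congr (hlie x y) rfl,
          commutatorMk_congr rfl (hlie x z), commutatorMk_lie, map_add]⟩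
  map_add' _ _ := rfl
  map_smul' _ _ := rfl

theorem commutatorCocycle_apply (s : L →ₗ[K] F) (hs : ∀ x, π (s x) = x)
    (f : commutatorQuotient π →ₗ[K] M) (a b : F) :
    (commutatorCocycle s hs f).1 (π a) (π b) = f (commutatorMk π a b) :=
  congrArg f (commutatorMk_congr (hs _) (hs _))

theorem commutatorCocycle_injective (s : L →ₗ[K] F) (hs : ∀ x, π (s x) = x) :
    Function.Injective (commutatorCocycle (M := M) s hs) := fun f g hfg =>
  commutatorQuotient_hom_ext fun a b => by
    rw [← commutatorCocycle_apply s hs f, hfg, commutatorCocycle_apply]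

/-- Free Lie algebras have no second cohomology: `φ` is read off the lift of `π` to the central
extension of `L` defined by `c`. -/
theorem exists_linearMap_lie_eq_cocycle {X : Type*} (π : FreeLieAlgebra K X →ₗ⁅K⁆ L)
    (c : twoCocycle K L M) :
    ∃ φ : FreeLieAlgebra K X →ₗ[K] M, ∀ a b, φ ⁅a, b⁆ = c.1 (π a) (π b) := by
  let lift : FreeLieAlgebra K X →ₗ⁅K⁆ LieAlgebra.ofTwoCocycle c :=
    FreeLieAlgebra.lift K fun x => ⟨(π (FreeLieAlgebra.of K x), 0)⟩
  let proj : LieAlgebra.ofTwoCocycle c →ₗ⁅K⁆ L :=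
    { toFun := fun x => x.carrier.1
      map_add' := fun _ _ => rfl
      map_smul' := fun _ _ => rfl
      map_lie' := rfl }
  let coord : LieAlgebra.ofTwoCocycle c →ₗ[K] M :=
    { toFun := fun x => x.carrier.2
      map_add' := fun _ _ => rfl
      map_smul' := fun _ _ => rfl }
  have hproj : proj.comp lift = π :=
    FreeLieAlgebra.hom_ext fun x => congrArg proj (FreeLieAlgebra.lift_of_apply _ x)
  refine ⟨coord ∘ₗ (lift : FreeLieAlgebra K X →ₗ[K] _), fun a b => ?_⟩
  calc coord (lift ⁅a, b⁆) = c.1 (proj (lift a)) (proj (lift b)) + ⁅proj (lift a), coord (lift b)⁆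
          - ⁅proj (lift b), coord (lift a)⁆ := by rw [LieHom.map_lie]; rfl
    _ = c.1 (π a) (π b) := by
      rw [trivial_lie_zero, trivial_lie_zero, ← hproj, add_zero, sub_zero]; rfl

theorem commutatorCocycle_surjective {X : Type*} {π : FreeLieAlgebra K X →ₗ⁅K⁆ L}
    (s : L →ₗ[K] FreeLieAlgebra K X) (hs : ∀ x, π (s x) = x) :
    Function.Surjective (commutatorCocycle (M := M) s hs) := by
  intro c
  obtain ⟨φ, hφ⟩ := exists_linearMap_lie_eq_cocycle π c
  have hker := ker_lie_top_le_ker φ (c := c.1.1) hφ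
  refine ⟨Submodule.liftQ _ (φ ∘ₗ Submodule.subtype _) fun z hz => hker hz, ?_⟩
  refine Subtype.ext (Subtype.ext (LinearMap.ext₂ fun x y => ?_))
  change φ ⁅s x, s y⁆ = c.1 x y
  rw [hφ, hs, hs]

theorem nonempty_dual_commutatorQuotient_equiv {X : Type*} {π : FreeLieAlgebra K X →ₗ⁅K⁆ L}
    (hπ : Function.Surjective π) :
    Nonempty ((commutatorQuotient π →ₗ[K] M) ≃ₗ[K] twoCocycle K L M) := by
  obtain ⟨s, hs⟩ := LinearMap.exists_rightInverse_of_surjective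
    (π : FreeLieAlgebra K X →ₗ[K] L) (LinearMap.range_eq_top.2 hπ)
  replace hs : ∀ x, π (s x) = x := LinearMap.congr_fun hs
  exact ⟨.ofBijective _ ⟨commutatorCocycle_injective s hs, commutatorCocycle_surjective s hs⟩⟩

theorem finrank_quotient_inf_ker_add_finrank_map {E E' : Type*} [AddCommGroup E] [Module K E]
    [AddCommGroup E'] [Module K E'] (f : E →ₗ[K] E') {D N S : Submodule K E}
    (hN : N = LinearMap.ker f ⊓ D) (hS : S ≤ LinearMap.ker f)
    [FiniteDimensional K (D ⧸ S.comap D.subtype)] :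
    finrank K (N ⧸ S.comap N.subtype) + finrank K (D.map f) =
      finrank K (D ⧸ S.comap D.subtype) := by
  subst hN
  have hdesc : S.comap D.subtype ≤ LinearMap.ker (f ∘ₗ D.subtype) := fun _ hz => hS hz
  let desc : D ⧸ S.comap D.subtype →ₗ[K] E' := Submodule.liftQ _ (f ∘ₗ D.subtype) hdesc
  let incl : ↥(LinearMap.ker f ⊓ D) →ₗ[K] D ⧸ S.comap D.subtype :=
    Submodule.mkQ _ ∘ₗ Submodule.inclusion inf_le_right
  have hrange : LinearMap.range desc = D.map f := by
    rw [Submodule.range_liftQ, LinearMap.range_comp, Submodule.range_subtype]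
  have hincl : LinearMap.ker incl = S.comap (LinearMap.ker f ⊓ D).subtype := by
    rw [show incl = Submodule.mkQ _ ∘ₗ _ from rfl, LinearMap.ker_comp, Submodule.ker_mkQ]
    rfl
  have hexact : LinearMap.range incl = LinearMap.ker desc := by
    ext z
    obtain ⟨⟨z, hz⟩, rfl⟩ := Submodule.mkQ_surjective _ z
    refine ⟨?_, fun hfz => ⟨⟨z, hfz, hz⟩, rfl⟩⟩
    rintro ⟨y, hy⟩
    rw [← hy]
    exact y.2.1
  rw [← hrange, ← hincl, (LinearMap.quotKerEquivRange incl).finrank_eq, hexact, add_comm,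
    LinearMap.finrank_range_add_finrank_ker]

theorem lieSchurMultiplierDim_add_lieDerivedDim_eq_finrank_commutatorQuotient {K L X : Type}
    [Field K] [LieRing L] [LieAlgebra K L] {π : FreeLieAlgebra K X →ₗ⁅K⁆ L}
    (hπ : Function.Surjective π) [FiniteDimensional K (commutatorQuotient π)] :
    lieSchurMultiplierDim K X π + lieDerivedDim K L = finrank K (commutatorQuotient π) := by
  let F := FreeLieAlgebra K X
  let F' : Submodule K F := (lowerCentralSeries K F F 1).toSubmodule
  let S : Submodule K F := (⁅π.ker, (⊤ : LieIdeal K F)⁆ : LieIdeal K F).toSubmodule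
  have hmap : (lowerCentralSeries K L L 1).toSubmodule = F'.map (π : F →ₗ[K] L) := by
    rw [← LieIdeal.lowerCentralSeries_map_eq 1 hπ, LieIdeal.coe_map_of_surjective hπ]
  have hderived : lieDerivedDim K L = finrank K (F'.map (π : F →ₗ[K] L)) :=
    congrArg (fun D : Submodule K L => finrank K D) hmap
  have hker : S ≤ LinearMap.ker (π : F →ₗ[K] L) := LieSubmodule.lie_le_left _ _
  rw [hderived]
  exact finrank_quotient_inf_ker_add_finrank_map (π : F →ₗ[K] L) (D := F') (S := S)
    (N := (π.ker ⊓ lowerCentralSeries K F F 1 : LieIdeal K F).toSubmodule) rfl hker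

theorem lieSchurMultiplierDim_add_lieDerivedDim {K L X : Type} [Field K] [LieRing L]
    [LieAlgebra K L] [FiniteDimensional K L] {π : FreeLieAlgebra K X →ₗ⁅K⁆ L}
    (hπ : Function.Surjective π) :
    lieSchurMultiplierDim K X π + lieDerivedDim K L =
      finrank K (twoCocycle K L (TrivialLieModule K L K)) := by
  obtain ⟨e⟩ := nonempty_dual_commutatorQuotient_equiv (M := TrivialLieModule K L K) hπ
  have : FiniteDimensional K (TrivialLieModule K L K) :=
    Module.Finite.equiv (TrivialLieModule.equiv K L K).symm
  have : FiniteDimensional K (twoCochain K L (TrivialLieModule K L K)) :=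
    FiniteDimensional.finiteDimensional_submodule _
  have : FiniteDimensional K (commutatorQuotient π) :=
    (finite_dual_iff K).1 (Module.Finite.equiv e.symm)
  rw [lieSchurMultiplierDim_add_lieDerivedDim_eq_finrank_commutatorQuotient hπ, ← e.finrank_eq]
  exact Subspace.dual_finrank_eq.symm

end HopfFormula

section CocyclesOfClassTwo

open LieModule LieModule.Cohomology

variable {K L V W : Type*} [Field K] [LieRing L] [LieAlgebra K L] [AddCommGroup V] [Module K V]
  [AddCommGroup W] [Module K W]

variable (K V) in
/-- The space of alternating bilinear forms on `V`. -/
def alternatingForms : Submodule K (V →ₗ[K] V →ₗ[K] K) where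
  carrier := {σ | σ.IsAlt}
  zero_mem' _ := rfl
  add_mem' hσ hτ x := by simp [hσ x, hτ x]
  smul_mem' t _ hσ x := by simp [hσ x]

variable (K V) in
/-- Alternating maps of two variables as alternating bilinear forms. -/
def alternatingMapEquivForms : (V [⋀^Fin 2]→ₗ[K] K) ≃ₗ[K] alternatingForms K V where
  toFun f :=
    ⟨{ toFun := fun x => AlternatingMap.ofSubsingleton K V K (0 : Fin 1) |>.symm (f.curryLeft x)
       map_add' := fun _ _ => by ext; simp
       map_smul' := fun _ _ => by ext; simp },
      fun x => f.map_eq_zero_of_eq (Matrix.vecCons x fun _ => x) (i := 0) (j := 1) rfl zero_ne_one⟩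
  map_add' _ _ := rfl
  map_smul' _ _ := rfl
  invFun σ :=
    { toFun := fun v => σ.1 (v 0) (v 1)
      map_update_add' := fun v i x y => by fin_cases i <;> simp [Function.update]
      map_update_smul' := fun v i x y => by fin_cases i <;> simp [Function.update]
      map_eq_zero_of_eq' := fun v i j hij hne => by
        have h : v 0 = v 1 := by fin_cases i <;> fin_cases j <;> simp_all
        rw [h]
        exact σ.2 _ }
  left_inv f := by
    ext v
    exact congrArg f (List.ofFn_inj.1 rfl)
  right_inv _ := rfl

theorem finrank_alternatingForms [FiniteDimensional K V] :
    finrank K (alternatingForms K V) = (finrank K V).choose 2 := by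
  rw [← (alternatingMapEquivForms K V).finrank_eq,
    exteriorPower.alternatingMapLinearEquiv.finrank_eq, ← exteriorPower.finrank_eq K 2]
  exact Subspace.dual_finrank_eq

theorem finrank_submodule_prod {E E' : Type*} [AddCommGroup E] [Module K E] [AddCommGroup E']
    [Module K E'] [FiniteDimensional K E] [FiniteDimensional K E'] (A : Submodule K E)
    (B : Submodule K E') : finrank K (A × B) = finrank K A + finrank K B :=
  finrank_prod

variable (K L V W) in
/-- Coordinates on a Lie algebra of nilpotency class at most two: a linear splitting `L ≃ V × W`
for which the bracket is given by a bilinear map `V × V → W` whose values span `W`, so that `W`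
is the derived subalgebra. -/
structure ClassTwoSplitting where
  equiv : L ≃ₗ[K] V × W
  form : V →ₗ[K] V →ₗ[K] W
  equiv_lie (x y : L) : equiv ⁅x, y⁆ = (0, form (equiv x).1 (equiv y).1)
  span_form : Submodule.span K {z | ∃ a b, form a b = z} = ⊤

namespace ClassTwoSplitting

variable (S : ClassTwoSplitting K L V W)

/-- The inclusion of the complement `V` of the derived subalgebra. -/
def inl : V →ₗ[K] L := S.equiv.symm.toLinearMap ∘ₗ LinearMap.inl K V W

/-- The inclusion of the derived subalgebra `W`. -/
def inr : W →ₗ[K] L := S.equiv.symm.toLinearMap ∘ₗ LinearMap.inr K V W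

/-- The projection onto `V` along the derived subalgebra. -/
def fst : L →ₗ[K] V := LinearMap.fst K V W ∘ₗ S.equiv.toLinearMap

/-- The projection onto the derived subalgebra along `V`. -/
def snd : L →ₗ[K] W := LinearMap.snd K V W ∘ₗ S.equiv.toLinearMap

@[simp] theorem fst_inl (v : V) : S.fst (S.inl v) = v := by simp [fst, inl]

@[simp] theorem fst_inr (w : W) : S.fst (S.inr w) = 0 := by simp [fst, inr]

@[simp] theorem snd_inl (v : V) : S.snd (S.inl v) = 0 := by simp [snd, inl]

@[simp] theorem snd_inr (w : W) : S.snd (S.inr w) = w := by simp [snd, inr]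

theorem inl_fst_add_inr_snd (x : L) : S.inl (S.fst x) + S.inr (S.snd x) = x :=
  S.equiv.injective (by simp [inl, inr, fst, snd])

theorem lie_eq (x y : L) : ⁅x, y⁆ = S.inr (S.form (S.fst x) (S.fst y)) :=
  S.equiv.injective (by simp [inr, fst, S.equiv_lie])

theorem form_isAlt : S.form.IsAlt := fun v => by
  simpa using congrArg S.snd ((S.lie_eq (S.inl v) (S.inl v)).symm.trans (lie_self _))

section Cocycle

variable {M : Type*} [AddCommGroup M] [Module K M] [LieRingModule L M] [LieModule K L M]
  [LieModule.IsTrivial L M]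

theorem cocycle_inr_inr (c : twoCocycle K L M) (w w' : W) : c.1 (S.inr w) (S.inr w') = 0 := by
  have hzero : c.1 (S.inr w) ∘ₗ S.inr = 0 := by
    refine LinearMap.ext_on S.span_form ?_
    rintro _ ⟨a, b, rfl⟩
    have h := (mem_twoCocycle_iff_of_trivial K L M _).1 c.2 (S.inr w) (S.inl a) (S.inl b)
    simpa [S.lie_eq] using h
  exact LinearMap.congr_fun hzero w'

end Cocycle

theorem compl₁₂_inl_inr_mem_jacobiPairings (c : twoCocycle K L (TrivialLieModule K L K)) :
    (c.1.1.compl₁₂ S.inl S.inr).compr₂ (TrivialLieModule.equiv K L K).toLinearMap ∈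
      jacobiPairings S.form := by
  refine mem_jacobiPairings.2 fun x y z => ?_
  have h := (mem_twoCocycle_iff_of_trivial K L _ _).1 c.2 (S.inl x) (S.inl y) (S.inl z)
  rw [← twoCochain_skew c.1 (S.inl z)] at h
  simp only [S.lie_eq, fst_inl] at h
  rw [← S.form_isAlt.neg x z]
  change c.1 _ _ + c.1 _ (S.inr _) + c.1 _ _ = 0
  rw [h, map_neg, map_neg]
  abel

/-- The cocycle on `L` assembled from an alternating form on `V` and a pairing of `V` with `W`. -/
def cocycleOf (σ : alternatingForms K V) (β : jacobiPairings S.form) :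
    twoCocycle K L (TrivialLieModule K L K) :=
  ⟨⟨(σ.1.compl₁₂ S.fst S.fst + β.1.compl₁₂ S.fst S.snd
      - (β.1.compl₁₂ S.fst S.snd).flip).compr₂ (TrivialLieModule.equiv K L K).symm.toLinearMap,
      fun x => by simp [σ.2 (S.fst x)]⟩,
    (mem_twoCocycle_iff_of_trivial K L _ _).2 fun x y z => by
      have hβ := mem_jacobiPairings.1 β.2 (S.fst x) (S.fst y) (S.fst z)
      rw [← S.form_isAlt.neg (S.fst x) (S.fst z), map_neg] at hβ
      refine (TrivialLieModule.equiv K L K).injective ?_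
      rw [map_add]
      simp only [← twoCochain_val_apply, LinearMap.compr₂_apply, LinearMap.sub_apply,
        LinearMap.add_apply, LinearMap.compl₁₂_apply, LinearMap.flip_apply, S.lie_eq, fst_inr,
        snd_inr, map_zero, LinearMap.zero_apply, LinearEquiv.coe_coe, LinearEquiv.apply_symm_apply]
      linear_combination hβ⟩

theorem cocycleOf_apply (σ : alternatingForms K V) (β : jacobiPairings S.form) (x y : L) :
    TrivialLieModule.equiv K L K ((S.cocycleOf σ β).1 x y) =
      σ.1 (S.fst x) (S.fst y) + β.1 (S.fst x) (S.snd y) - β.1 (S.fst y) (S.snd x) :=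
  rfl

/-- A cocycle on `L` vanishes on `W × W`, so it consists of an alternating form on `V` and a
pairing of `V` with `W`; the cocycle condition becomes the Jacobi-type identity on the pairing. -/
def cocycleEquiv : twoCocycle K L (TrivialLieModule K L K) ≃ₗ[K]
    alternatingForms K V × jacobiPairings S.form where
  toFun c :=
    (⟨(c.1.1.compl₁₂ S.inl S.inl).compr₂ (TrivialLieModule.equiv K L K).toLinearMap,
        fun v => c.1.2 (S.inl v)⟩,
      ⟨_, S.compl₁₂_inl_inr_mem_jacobiPairings c⟩)
  map_add' _ _ := rfl
  map_smul' _ _ := rfl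
  invFun p := S.cocycleOf p.1 p.2
  left_inv c := by
    refine Subtype.ext (Subtype.ext (LinearMap.ext₂ fun x y => ?_))
    change c.1 (S.inl (S.fst x)) (S.inl (S.fst y)) + c.1 (S.inl (S.fst x)) (S.inr (S.snd y))
      - c.1 (S.inl (S.fst y)) (S.inr (S.snd x)) = c.1 x y
    conv_rhs => rw [← S.inl_fst_add_inr_snd x, ← S.inl_fst_add_inr_snd y]
    rw [← twoCochain_skew c.1 (S.inr (S.snd x)), sub_neg_eq_add, map_add c.1,
      LinearMap.add_apply, map_add, map_add, S.cocycle_inr_inr, add_zero, add_right_comm]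
  right_inv p := by
    refine Prod.ext (Subtype.ext (LinearMap.ext₂ fun v w => ?_))
      (Subtype.ext (LinearMap.ext₂ fun v w => ?_)) <;>
    refine (S.cocycleOf_apply p.1 p.2 _ _).trans ?_ <;> simp

theorem finrank_twoCocycle [FiniteDimensional K V] [FiniteDimensional K W] :
    finrank K (twoCocycle K L (TrivialLieModule K L K)) =
      (finrank K V).choose 2 + finrank K (jacobiPairings S.form) := by
  rw [S.cocycleEquiv.finrank_eq, ← finrank_alternatingForms (K := K) (V := V)]
  exact finrank_submodule_prod (E := V →ₗ[K] V →ₗ[K] K) (E' := V →ₗ[K] W →ₗ[K] K) _ _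

end ClassTwoSplitting

end CocyclesOfClassTwo

section MultiplierOfClassTwo

open LieModule LieModule.Cohomology

section Complement

variable {K L : Type*} [Field K] [LieRing L] [LieAlgebra K L] {V : Submodule K L}

theorem lie_eq_zero_of_mem_lowerCentralSeries_one (hL : lowerCentralSeries K L L 2 = ⊥) (x : L)
    {z : L} (hz : z ∈ lowerCentralSeries K L L 1) : ⁅x, z⁆ = 0 := by
  rw [← LieSubmodule.mem_bot (R := K) (L := L), ← hL, lowerCentralSeries_succ]
  exact LieSubmodule.lie_mem_lie (LieSubmodule.mem_top x) hz

theorem lie_prodEquivOfIsCompl_symm_fst (hL : lowerCentralSeries K L L 2 = ⊥)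
    (hV : IsCompl V (lowerCentralSeries K L L 1).toSubmodule) (x y : L) :
    ⁅(((V.prodEquivOfIsCompl _ hV).symm x).1 : L), (((V.prodEquivOfIsCompl _ hV).symm y).1 : L)⁆ =
      ⁅x, y⁆ := by
  let e := (V.prodEquivOfIsCompl _ hV).symm
  have hdecomp (x : L) : ((e x).1 : L) + (e x).2 = x := e.symm_apply_apply x
  conv_rhs => rw [← hdecomp x, ← hdecomp y]
  rw [lie_add, lie_eq_zero_of_mem_lowerCentralSeries_one hL _ (e y).2.2, add_lie,
    ← lie_skew ((e x).2 : L), lie_eq_zero_of_mem_lowerCentralSeries_one hL _ (e x).2.2, neg_zero,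
    add_zero, add_zero]

variable (V) in
/-- The bracket of `L` restricted to a subspace, with values in `L²`. -/
def lieToDerived : V →ₗ[K] V →ₗ[K] (lowerCentralSeries K L L 1).toSubmodule :=
  LinearMap.mk₂ K (fun a b => ⟨⁅(a : L), (b : L)⁆, lie_mem_lowerCentralSeries_one _ _⟩)
    (fun _ _ _ => Subtype.ext (add_lie _ _ _)) (fun _ _ _ => Subtype.ext (smul_lie _ _ _))
    (fun _ _ _ => Subtype.ext (lie_add _ _ _)) (fun _ _ _ => Subtype.ext (lie_smul _ _ _))

/-- The splitting of a Lie algebra of class at most two given by a complement of `L²`. -/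
noncomputable def ClassTwoSplitting.ofIsCompl (hL : lowerCentralSeries K L L 2 = ⊥)
    (hV : IsCompl V (lowerCentralSeries K L L 1).toSubmodule) :
    ClassTwoSplitting K L V (lowerCentralSeries K L L 1).toSubmodule where
  equiv := (V.prodEquivOfIsCompl _ hV).symm
  form := lieToDerived V
  equiv_lie x y := by
    rw [← lie_prodEquivOfIsCompl_symm_fst hL hV x y]
    exact Submodule.prodEquivOfIsCompl_symm_apply_right V _ hV (lieToDerived V _ _)
  span_form := by
    refine Submodule.map_injective_of_injective (Submodule.subtype_injective _) ?_
    rw [Submodule.map_span, Submodule.map_top, Submodule.range_subtype]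
    refine le_antisymm (Submodule.span_le.2 ?_)
      (lowerCentralSeries_one_eq_span.trans_le (Submodule.span_mono ?_))
    · rintro _ ⟨z, -, rfl⟩
      exact z.2
    · rintro _ ⟨a, b, rfl⟩
      exact ⟨_, ⟨_, _, rfl⟩, lie_prodEquivOfIsCompl_symm_fst hL hV a b⟩

end Complement

namespace ClassTwoSplitting

variable {K L : Type*} [Field K] [LieRing L] [LieAlgebra K L]

variable {V W : Type*} [AddCommGroup V] [Module K V] [AddCommGroup W] [Module K W]

variable (S : ClassTwoSplitting K L V W)

theorem lowerCentralSeries_one_eq_range_inr :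
    (lowerCentralSeries K L L 1).toSubmodule = LinearMap.range S.inr := by
  have hset : {z | ∃ a b : L, ⁅a, b⁆ = z} = S.inr '' {z | ∃ a b, S.form a b = z} := by
    ext z
    constructor
    · rintro ⟨a, b, rfl⟩
      exact ⟨_, ⟨S.fst a, S.fst b, rfl⟩, (S.lie_eq a b).symm⟩
    · rintro ⟨_, ⟨v, w, rfl⟩, rfl⟩
      exact ⟨S.inl v, S.inl w, by simp [S.lie_eq]⟩
  rw [lowerCentralSeries_one_eq_span, hset, ← Submodule.map_span, S.span_form, Submodule.map_top]

theorem form_ne_zero (hL : lowerCentralSeries K L L 1 ≠ ⊥) : S.form ≠ 0 := by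
  intro h
  have hbot : (lowerCentralSeries K L L 1).toSubmodule = ⊥ := by
    rw [lowerCentralSeries_one_eq_span, Submodule.span_eq_bot]
    rintro _ ⟨a, b, rfl⟩
    simp [S.lie_eq, h]
  exact hL ((LieSubmodule.toSubmodule_eq_bot _).1 hbot)

theorem finrank_eq (S : ClassTwoSplitting K L V W) [FiniteDimensional K V] [FiniteDimensional K W] :
    finrank K L = finrank K V + finrank K W := by
  rw [S.equiv.finrank_eq, finrank_prod]

end ClassTwoSplitting

theorem add_sub_two_mul_sub_one_ediv_two (d m : ℕ) :
    (((d + m : ℕ) : ℤ) + m - 2) * (((d + m : ℕ) : ℤ) - m - 1) / 2 =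
      d.choose 2 + ((m : ℤ) - 1) * (d - 1) := by
  have htwo : (2 : ℤ) * d.choose 2 = d * (d - 1) := by
    induction d with
    | zero => simp
    | succ d ih =>
      rw [Nat.choose_succ_succ' d 1, Nat.choose_one_right]
      push_cast
      linear_combination ih
  refine Int.ediv_eq_of_eq_mul_right two_ne_zero ?_
  push_cast
  linear_combination -htwo

namespace ClassTwoSplitting

variable {K L V W : Type} [Field K] [LieRing L] [LieAlgebra K L] [AddCommGroup V] [Module K V]
  [AddCommGroup W] [Module K W] (S : ClassTwoSplitting K L V W)

theorem lieDerivedDim_eq (S : ClassTwoSplitting K L V W) : lieDerivedDim K L = finrank K W := by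
  have hinj : Function.Injective S.inr := Function.LeftInverse.injective S.snd_inr
  rw [← LinearMap.finrank_range_of_inj hinj]
  exact congrArg (fun D : Submodule K L => finrank K D) S.lowerCentralSeries_one_eq_range_inr

variable [FiniteDimensional K V] [FiniteDimensional K W]

theorem lieSchurMultiplierDim_eq_iff {X : Type} {π : FreeLieAlgebra K X →ₗ⁅K⁆ L}
    (hπ : Function.Surjective π) :
    (lieSchurMultiplierDim K X π : ℤ) = ((finrank K L : ℤ) + lieDerivedDim K L - 2) *
        ((finrank K L : ℤ) - lieDerivedDim K L - 1) / 2 + 1 ↔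
      finrank K (jacobiPairings S.form) + finrank K V = finrank K V * finrank K W + 2 := by
  have : FiniteDimensional K L := Module.Finite.equiv S.equiv.symm
  have hdim := lieSchurMultiplierDim_add_lieDerivedDim hπ
  rw [S.finrank_twoCocycle, S.lieDerivedDim_eq] at hdim
  rw [S.lieDerivedDim_eq, S.finrank_eq, add_sub_two_mul_sub_one_ediv_two]
  zify at hdim ⊢
  constructor <;> intro h <;> linarith

end ClassTwoSplitting

end MultiplierOfClassTwo

section Presentation

open FreeLieAlgebra LieSubmodule

variable {K X : Type*} [Field K]

/-- A set `s` of relators expresses every bracket of two generators as a linear combination of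
generators. -/
def IsMultiplicationTable (s : Set (FreeLieAlgebra K X)) : Prop :=
  ∀ i j : X, ⁅of K i, of K j⁆ ∈
    Submodule.span K (Set.range (of K)) ⊔ (lieSpan K (FreeLieAlgebra K X) s).toSubmodule

variable {s : Set (FreeLieAlgebra K X)}

theorem isMultiplicationTable_of_trichotomous {r : X → X → Prop}
    (hr : ∀ i j, r i j ∨ i = j ∨ r j i)
    (hs : ∀ i j, r i j → ⁅of K i, of K j⁆ ∈ s ∨ ∃ k, ⁅of K i, of K j⁆ - of K k ∈ s) :
    IsMultiplicationTable s := by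
  intro i j
  have hmem {i j : X} (hij : r i j) : ⁅of K i, of K j⁆ ∈
      Submodule.span K (Set.range (of K)) ⊔ (lieSpan K (FreeLieAlgebra K X) s).toSubmodule := by
    rcases hs i j hij with h | ⟨k, h⟩
    · exact Submodule.mem_sup_right (subset_lieSpan h)
    · exact Submodule.mem_sup.2 ⟨of K k, Submodule.subset_span ⟨k, rfl⟩, _, subset_lieSpan h,
        add_sub_cancel _ _⟩
  rcases hr i j with hij | rfl | hji
  · exact hmem hij
  · rw [lie_self]
    exact Submodule.zero_mem _
  · rw [← lie_skew]
    exact Submodule.neg_mem _ (hmem hji)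

variable {L : Type*} [LieRing L] [LieAlgebra K L]

theorem span_range_comp_of_eq_top {φ : FreeLieAlgebra K X →ₗ⁅K⁆ L} (hφ : Function.Surjective φ)
    (hlie : ∀ i j, ⁅φ (of K i), φ (of K j)⁆ ∈ Submodule.span K (Set.range (φ ∘ of K))) :
    Submodule.span K (Set.range (φ ∘ of K)) = ⊤ := by
  let P := Submodule.span K (Set.range (φ ∘ of K))
  have hP : P.map₂ (LieModule.toEnd K L L : L →ₗ[K] L →ₗ[K] L) P ≤ P := by
    rw [Submodule.map₂_span_span, Submodule.span_le]
    rintro _ ⟨_, ⟨i, rfl⟩, _, ⟨j, rfl⟩, rfl⟩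
    exact hlie i j
  let A : LieSubalgebra K L :=
    { P with lie_mem' := fun hx hy => hP (Submodule.apply_mem_map₂ _ hx hy) }
  let ψ : FreeLieAlgebra K X →ₗ⁅K⁆ A := lift K fun i => ⟨φ (of K i), Submodule.subset_span ⟨i, rfl⟩⟩
  have hψ : A.incl.comp ψ = φ := hom_ext fun i => by
    rw [LieHom.comp_apply, lift_of_apply]
    rfl
  refine Submodule.eq_top_iff'.2 fun z => ?_
  obtain ⟨a, rfl⟩ := hφ z
  exact LieHom.congr_fun hψ a ▸ (ψ a).2

theorem IsMultiplicationTable.span_range_comp_of_eq_top (hs : IsMultiplicationTable s)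
    {φ : FreeLieAlgebra K X →ₗ⁅K⁆ L} (hφ : Function.Surjective φ) (hφs : ∀ z ∈ s, φ z = 0) :
    Submodule.span K (Set.range (φ ∘ of K)) = ⊤ := by
  refine _root_.span_range_comp_of_eq_top hφ fun i j => ?_
  have hker : lieSpan K (FreeLieAlgebra K X) s ≤ φ.ker :=
    lieSpan_le.2 fun z hz => LieHom.mem_ker.2 (hφs z hz)
  obtain ⟨y, hy, z, hz, hyz⟩ := Submodule.mem_sup.1 (hs i j)
  rw [← LieHom.map_lie, ← hyz, map_add, LieHom.mem_ker.1 (hker hz), add_zero, Set.range_comp]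
  exact Submodule.apply_mem_span_image_of_mem_span (φ : FreeLieAlgebra K X →ₗ[K] L) hy

variable (s) in
/-- The canonical map from the free Lie algebra to the Lie algebra presented by the relators `s`. -/
noncomputable def presentationMk :
    FreeLieAlgebra K X →ₗ⁅K⁆ FreeLieAlgebra K X ⧸ lieSpan K (FreeLieAlgebra K X) s where
  __ := (lieSpan K (FreeLieAlgebra K X) s).toSubmodule.mkQ
  map_lie' := LieSubmodule.Quotient.mk_bracket _ _ _

theorem presentationMk_surjective : Function.Surjective (presentationMk s) :=
  Submodule.mkQ_surjective _

theorem presentationMk_eq_zero {z : FreeLieAlgebra K X} (hz : z ∈ s) : presentationMk s z = 0 :=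
  (Submodule.Quotient.mk_eq_zero _).2 (subset_lieSpan hz)

/-- The map out of the Lie algebra presented by `s` induced by a map that kills `s`. -/
noncomputable def presentationLift (φ : FreeLieAlgebra K X →ₗ⁅K⁆ L) (hφs : ∀ z ∈ s, φ z = 0) :
    (FreeLieAlgebra K X ⧸ lieSpan K (FreeLieAlgebra K X) s) →ₗ⁅K⁆ L where
  __ := (lieSpan K (FreeLieAlgebra K X) s).toSubmodule.liftQ (φ : FreeLieAlgebra K X →ₗ[K] L)
    (show lieSpan K (FreeLieAlgebra K X) s ≤ φ.ker from
      lieSpan_le.2 fun z hz => LieHom.mem_ker.2 (hφs z hz))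
  map_lie' {x y} := by
    obtain ⟨a, rfl⟩ := presentationMk_surjective x
    obtain ⟨b, rfl⟩ := presentationMk_surjective y
    exact φ.map_lie a b

theorem IsMultiplicationTable.finrank_le [Fintype X] (hs : IsMultiplicationTable s)
    {φ : FreeLieAlgebra K X →ₗ⁅K⁆ L} (hφ : Function.Surjective φ) (hφs : ∀ z ∈ s, φ z = 0) :
    finrank K L ≤ Fintype.card X := by
  rw [← finrank_top K L, ← hs.span_range_comp_of_eq_top hφ hφs]
  exact finrank_range_le_card (φ ∘ of K)

theorem IsMultiplicationTable.finiteDimensional [Finite X] (hs : IsMultiplicationTable s)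
    {φ : FreeLieAlgebra K X →ₗ⁅K⁆ L} (hφ : Function.Surjective φ) (hφs : ∀ z ∈ s, φ z = 0) :
    FiniteDimensional K L :=
  ⟨hs.span_range_comp_of_eq_top hφ hφs ▸ Submodule.fg_span (Set.finite_range _)⟩

theorem IsMultiplicationTable.nonempty_equiv [Fintype X] (hs : IsMultiplicationTable s)
    {φ : FreeLieAlgebra K X →ₗ⁅K⁆ L} (hφ : Function.Surjective φ) (hφs : ∀ z ∈ s, φ z = 0)
    (hX : Fintype.card X ≤ finrank K L) :
    Nonempty (L ≃ₗ⁅K⁆ FreeLieAlgebra K X ⧸ lieSpan K (FreeLieAlgebra K X) s) := by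
  let Q := FreeLieAlgebra K X ⧸ lieSpan K (FreeLieAlgebra K X) s
  let g : Q →ₗ[K] L := (presentationLift φ hφs : Q →ₗ⁅K⁆ L)
  have hmk (z) (hz : z ∈ s) := presentationMk_eq_zero hz
  have : FiniteDimensional K L := hs.finiteDimensional hφ hφs
  have : FiniteDimensional K Q := hs.finiteDimensional presentationMk_surjective hmk
  have hsurj : Function.Surjective g := fun y => by
    obtain ⟨a, rfl⟩ := hφ y
    exact ⟨presentationMk s a, rfl⟩
  have hfinrank : finrank K Q = finrank K L :=
    ((hs.finrank_le presentationMk_surjective hmk).trans hX).antisymm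
      (LinearMap.finrank_le_finrank_of_surjective hsurj)
  have hinj : Function.Injective g :=
    (LinearMap.injective_iff_surjective_of_finrank_eq_finrank hfinrank).2 hsurj
  exact ⟨(LieEquiv.ofBijective (presentationLift φ hφs) ⟨hinj, hsurj⟩).symm⟩

theorem IsMultiplicationTable.exists_span_range_eq_top (hs : IsMultiplicationTable s)
    (E : L ≃ₗ⁅K⁆ FreeLieAlgebra K X ⧸ lieSpan K (FreeLieAlgebra K X) s) :
    ∃ x : X → L, Submodule.span K (Set.range x) = ⊤ ∧ ∀ z ∈ s, lift K x z = 0 := by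
  let φ : FreeLieAlgebra K X →ₗ⁅K⁆ L := E.symm.toLieHom.comp (presentationMk s)
  have hφs (z) (hz : z ∈ s) : φ z = 0 := by
    simp [φ, presentationMk_eq_zero hz]
  refine ⟨φ ∘ of K, hs.span_range_comp_of_eq_top
    (E.symm.surjective.comp presentationMk_surjective) hφs, ?_⟩
  rwa [lift_comp_of]

end Presentation

namespace ClassTwoSplitting

open FreeLieAlgebra

variable {K L L' V W X : Type*} [Field K] [LieRing L] [LieAlgebra K L] [LieRing L']
  [LieAlgebra K L'] [AddCommGroup V] [Module K V] [AddCommGroup W] [Module K W]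
  (S : ClassTwoSplitting K L V W)

theorem surjective_of_fst_comp_surjective {φ : L' →ₗ⁅K⁆ L}
    (hφ : Function.Surjective (S.fst ∘ φ)) : Function.Surjective φ := by
  have hinr : LinearMap.range S.inr ≤ φ.range.toSubmodule := by
    rw [LinearMap.range_eq_map, ← S.span_form, Submodule.map_span, Submodule.span_le]
    rintro _ ⟨_, ⟨v, w, rfl⟩, rfl⟩
    obtain ⟨a, rfl⟩ := hφ v
    obtain ⟨b, rfl⟩ := hφ w
    exact ⟨⁅a, b⁆, (LieHom.map_lie φ a b).trans (S.lie_eq _ _)⟩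
  intro x
  obtain ⟨a, ha⟩ := hφ (S.fst x)
  obtain ⟨b, hb⟩ := hinr ⟨S.snd (x - φ a), rfl⟩
  have hx := S.inl_fst_add_inr_snd (x - φ a)
  rw [map_sub, ← ha, Function.comp_apply, sub_self, map_zero, zero_add, ← hb] at hx
  exact ⟨b + a, (map_add φ b a).trans (eq_sub_iff_add_eq.1 hx)⟩

theorem lift_surjective {x : X → L} (hx : Submodule.span K (Set.range (S.fst ∘ x)) = ⊤) :
    Function.Surjective (lift K x) := by
  refine S.surjective_of_fst_comp_surjective
    (LinearMap.range_eq_top (f := S.fst ∘ₗ (lift K x).toLinearMap) |>.1 (top_unique ?_))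
  rw [← hx, Submodule.span_le]
  rintro _ ⟨i, rfl⟩
  exact ⟨of K i, congrArg S.fst (lift_of_apply x i)⟩

theorem span_range_fst_comp_eq_top {x : X → L} (hx : Submodule.span K (Set.range x) = ⊤) :
    Submodule.span K (Set.range (S.fst ∘ x)) = ⊤ := by
  rw [Set.range_comp, ← Submodule.map_span, hx, Submodule.map_top, LinearMap.range_eq_top]
  exact Function.RightInverse.surjective S.fst_inl

theorem finrank_le_card_of_span_range_eq_top {x : X → L}
    (hx : Submodule.span K (Set.range x) = ⊤) (t : Finset X) (ht : ∀ i ∉ t, S.fst (x i) = 0) :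
    finrank K V ≤ t.card := by
  classical
  have hspan : Submodule.span K (t.image (S.fst ∘ x) : Set V) = ⊤ := by
    rw [← top_le_iff, ← S.span_range_fst_comp_eq_top hx, Submodule.span_le]
    rintro _ ⟨i, rfl⟩
    by_cases hi : i ∈ t
    · exact Submodule.subset_span (Finset.mem_image_of_mem _ hi)
    · rw [Function.comp_apply, ht i hi]
      exact Submodule.zero_mem _
  rw [← finrank_top K V, ← hspan]
  exact (finrank_span_finset_le_card _).trans Finset.card_image_le

theorem fst_lie (x y : L) : S.fst ⁅x, y⁆ = 0 := by
  rw [S.lie_eq, fst_inr]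

end ClassTwoSplitting

section Models

open FreeLieAlgebra

/-- The relators in the definition of `lieL58`. -/
def lieL58Relators (K : Type) [Field K] : Set (FreeLieAlgebra K (Fin 5)) :=
  let x : Fin 5 → FreeLieAlgebra K (Fin 5) := of K
  {⁅x 0, x 1⁆ - x 3, ⁅x 0, x 2⁆ - x 4, ⁅x 0, x 3⁆, ⁅x 0, x 4⁆, ⁅x 1, x 2⁆,
   ⁅x 1, x 3⁆, ⁅x 1, x 4⁆, ⁅x 2, x 3⁆, ⁅x 2, x 4⁆, ⁅x 3, x 4⁆}

/-- The relators in the definition of `lieL626`. -/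
def lieL626Relators (K : Type) [Field K] : Set (FreeLieAlgebra K (Fin 6)) :=
  let x : Fin 6 → FreeLieAlgebra K (Fin 6) := of K
  {⁅x 0, x 1⁆ - x 3, ⁅x 0, x 2⁆ - x 4, ⁅x 1, x 2⁆ - x 5,
   ⁅x 0, x 3⁆, ⁅x 0, x 4⁆, ⁅x 0, x 5⁆, ⁅x 1, x 3⁆, ⁅x 1, x 4⁆, ⁅x 1, x 5⁆,
   ⁅x 2, x 3⁆, ⁅x 2, x 4⁆, ⁅x 2, x 5⁆, ⁅x 3, x 4⁆, ⁅x 3, x 5⁆, ⁅x 4, x 5⁆}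

/-- The relators in the definition of `heisenbergPlusAbelian`. -/
def heisenbergPlusAbelianRelators (K : Type) [Field K] (k : ℕ) :
    Set (FreeLieAlgebra K (Fin 3 ⊕ Fin k)) :=
  let x : Fin 3 ⊕ Fin k → FreeLieAlgebra K (Fin 3 ⊕ Fin k) := of K
  insert (⁅x (.inl 0), x (.inl 1)⁆ - x (.inl 2))
    {z | ∃ i j : Fin 3 ⊕ Fin k,
      ¬(i = .inl 0 ∧ j = .inl 1) ∧ ¬(i = .inl 1 ∧ j = .inl 0) ∧ z = ⁅x i, x j⁆}

variable {K : Type} [Field K]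

theorem isMultiplicationTable_lieL58Relators : IsMultiplicationTable (lieL58Relators K) := by
  refine isMultiplicationTable_of_trichotomous lt_trichotomy fun i j hij => ?_
  fin_cases i <;> fin_cases j <;> solve
    | exact absurd hij (by decide)
    | left; simp [lieL58Relators]
    | refine .inr ⟨3, ?_⟩; simp [lieL58Relators]
    | refine .inr ⟨4, ?_⟩; simp [lieL58Relators]

theorem isMultiplicationTable_lieL626Relators : IsMultiplicationTable (lieL626Relators K) := by
  refine isMultiplicationTable_of_trichotomous lt_trichotomy fun i j hij => ?_
  fin_cases i <;> fin_cases j <;> solve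
    | exact absurd hij (by decide)
    | left; simp [lieL626Relators]
    | refine .inr ⟨3, ?_⟩; simp [lieL626Relators]
    | refine .inr ⟨4, ?_⟩; simp [lieL626Relators]
    | refine .inr ⟨5, ?_⟩; simp [lieL626Relators]

theorem isMultiplicationTable_heisenbergPlusAbelianRelators (k : ℕ) :
    IsMultiplicationTable (heisenbergPlusAbelianRelators K k) := by
  refine isMultiplicationTable_of_trichotomous
    (r := fun i j => ¬(i = .inl 1 ∧ j = .inl 0)) (fun i j => ?_) fun i j hij => ?_
  · by_cases h : i = .inl 1 ∧ j = .inl 0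
    · exact .inr (.inr (by simp [h]))
    · exact .inl h
  · by_cases h : i = .inl 0 ∧ j = .inl 1
    · obtain ⟨rfl, rfl⟩ := h
      exact .inr ⟨.inl 2, Set.mem_insert _ _⟩
    · exact .inl (Set.mem_insert_of_mem _ ⟨i, j, h, hij, rfl⟩)

namespace ClassTwoSplitting

variable {L V W : Type} [LieRing L] [LieAlgebra K L] [AddCommGroup V] [Module K V]
  [AddCommGroup W] [Module K W] (S : ClassTwoSplitting K L V W)

theorem finrank_le_three_of_equiv_lieL58 (S : ClassTwoSplitting K L V W) (E : L ≃ₗ⁅K⁆ lieL58 K) :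
    finrank K V ≤ 3 := by
  obtain ⟨x, hx, hrel⟩ := isMultiplicationTable_lieL58Relators.exists_span_range_eq_top E
  have h3 := hrel (⁅of K (0 : Fin 5), of K 1⁆ - of K 3) (by simp [lieL58Relators])
  have h4 := hrel (⁅of K (0 : Fin 5), of K 2⁆ - of K 4) (by simp [lieL58Relators])
  simp only [map_sub, LieHom.map_lie, lift_of_apply, sub_eq_zero] at h3 h4
  refine S.finrank_le_card_of_span_range_eq_top hx {0, 1, 2} fun i hi => ?_
  fin_cases i <;> solve
    | exact absurd (by decide) hi
    | exact h3 ▸ S.fst_lie _ _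
    | exact h4 ▸ S.fst_lie _ _

theorem finrank_le_three_of_equiv_lieL626 (S : ClassTwoSplitting K L V W)
    (E : L ≃ₗ⁅K⁆ lieL626 K) : finrank K V ≤ 3 := by
  obtain ⟨x, hx, hrel⟩ := isMultiplicationTable_lieL626Relators.exists_span_range_eq_top E
  have h3 := hrel (⁅of K (0 : Fin 6), of K 1⁆ - of K 3) (by simp [lieL626Relators])
  have h4 := hrel (⁅of K (0 : Fin 6), of K 2⁆ - of K 4) (by simp [lieL626Relators])
  have h5 := hrel (⁅of K (1 : Fin 6), of K 2⁆ - of K 5) (by simp [lieL626Relators])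
  simp only [map_sub, LieHom.map_lie, lift_of_apply, sub_eq_zero] at h3 h4 h5
  refine S.finrank_le_card_of_span_range_eq_top hx {0, 1, 2} fun i hi => ?_
  fin_cases i <;> solve
    | exact absurd (by decide) hi
    | exact h3 ▸ S.fst_lie _ _
    | exact h4 ▸ S.fst_lie _ _
    | exact h5 ▸ S.fst_lie _ _

theorem lie_eq_zero_iff {x y : L} : ⁅x, y⁆ = 0 ↔ S.form (S.fst x) (S.fst y) = 0 := by
  rw [S.lie_eq, map_eq_zero_iff _ (Function.LeftInverse.injective S.snd_inr)]

theorem exists_span_pair_sup_ker_eq_top_of_equiv_heisenbergPlusAbelian {k : ℕ}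
    (E : L ≃ₗ⁅K⁆ heisenbergPlusAbelian K k) :
    ∃ v w, Submodule.span K {v, w} ⊔ LinearMap.ker S.form = ⊤ := by
  obtain ⟨x, hx, hrel⟩ :=
    (isMultiplicationTable_heisenbergPlusAbelianRelators k).exists_span_range_eq_top E
  have hspan := S.span_range_fst_comp_eq_top hx
  have hker (i) (hi0 : i ≠ .inl 0) (hi1 : i ≠ .inl 1) : S.fst (x i) ∈ LinearMap.ker S.form := by
    refine LinearMap.ext_on hspan ?_
    rintro _ ⟨j, rfl⟩
    have hij := hrel ⁅of K i, of K j⁆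
      (Set.mem_insert_of_mem _ ⟨i, j, fun h => hi0 h.1, fun h => hi1 h.1, rfl⟩)
    rw [LieHom.map_lie, lift_of_apply, lift_of_apply] at hij
    exact S.lie_eq_zero_iff.1 hij
  refine ⟨S.fst (x (.inl 0)), S.fst (x (.inl 1)), top_unique ?_⟩
  rw [← hspan, Submodule.span_le]
  rintro _ ⟨i, rfl⟩
  by_cases hi : i = .inl 0 ∨ i = .inl 1
  · refine Submodule.mem_sup_left (Submodule.subset_span ?_)
    rcases hi with rfl | rfl <;> simp
  · rw [not_or] at hi
    exact Submodule.mem_sup_right (hker i hi.1 hi.2)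

theorem nonempty_equiv_lieL58 {v w u : V} (hspan : Submodule.span K {v, w, u} = ⊤)
    (hwu : S.form w u = 0) (hL : 5 ≤ finrank K L) : Nonempty (L ≃ₗ⁅K⁆ lieL58 K) := by
  let x : Fin 5 → L :=
    ![S.inl v, S.inl w, S.inl u, S.inr (S.form v w), S.inr (S.form v u)]
  have hx : Submodule.span K (Set.range (S.fst ∘ x)) = ⊤ := by
    refine top_unique (hspan.ge.trans (Submodule.span_mono ?_))
    rintro _ (rfl | rfl | rfl)
    exacts [⟨0, S.fst_inl _⟩, ⟨1, S.fst_inl _⟩, ⟨2, S.fst_inl _⟩]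
  have hrel (z) (hz : z ∈ lieL58Relators K) : lift K x z = 0 := by
    rcases hz with rfl | rfl | rfl | rfl | rfl | rfl | rfl | rfl | rfl | rfl <;>
      simp [x, S.lie_eq, hwu]
  exact isMultiplicationTable_lieL58Relators.nonempty_equiv (S.lift_surjective hx) hrel
    (by simpa using hL)

theorem nonempty_equiv_lieL626 (S : ClassTwoSplitting K L V W) {v w u : V}
    (hspan : Submodule.span K {v, w, u} = ⊤) (hL : 6 ≤ finrank K L) :
    Nonempty (L ≃ₗ⁅K⁆ lieL626 K) := by
  let x : Fin 6 → L := ![S.inl v, S.inl w, S.inl u,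
    S.inr (S.form v w), S.inr (S.form v u), S.inr (S.form w u)]
  have hx : Submodule.span K (Set.range (S.fst ∘ x)) = ⊤ := by
    refine top_unique (hspan.ge.trans (Submodule.span_mono ?_))
    rintro _ (rfl | rfl | rfl)
    exacts [⟨0, S.fst_inl _⟩, ⟨1, S.fst_inl _⟩, ⟨2, S.fst_inl _⟩]
  have hrel (z) (hz : z ∈ lieL626Relators K) : lift K x z = 0 := by
    rcases hz with rfl | rfl | rfl | rfl | rfl | rfl | rfl | rfl | rfl | rfl | rfl | rfl | rfl |
      rfl | rfl <;> simp [x, S.lie_eq]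
  exact isMultiplicationTable_lieL626Relators.nonempty_equiv (S.lift_surjective hx) hrel
    (by simpa using hL)

theorem nonempty_equiv_heisenbergPlusAbelian_of_basis {v w : V} {k : ℕ}
    (hspan : Submodule.span K {v, w} ⊔ LinearMap.ker S.form = ⊤)
    (b : Basis (Fin k) K (LinearMap.ker S.form)) (hL : k + 3 ≤ finrank K L) :
    Nonempty (L ≃ₗ⁅K⁆ heisenbergPlusAbelian K k) := by
  let x : Fin 3 ⊕ Fin k → L :=
    Sum.elim ![S.inl v, S.inl w, S.inr (S.form v w)] fun j => S.inl (b j)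
  have hx : Submodule.span K (Set.range (S.fst ∘ x)) = ⊤ := by
    have hb : (Submodule.span K (Set.range b)).map (LinearMap.ker S.form).subtype =
        LinearMap.ker S.form := by
      rw [b.span_eq, Submodule.map_subtype_top]
    rw [Submodule.map_span] at hb
    rw [← hb, ← Submodule.span_union] at hspan
    refine top_unique (hspan.ge.trans (Submodule.span_mono ?_))
    rintro _ ((rfl | rfl) | ⟨_, ⟨j, rfl⟩, rfl⟩)
    exacts [⟨.inl 0, S.fst_inl _⟩, ⟨.inl 1, S.fst_inl _⟩, ⟨.inr j, S.fst_inl _⟩]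
  have hker (i) (hi0 : i ≠ .inl 0) (hi1 : i ≠ .inl 1) : S.fst (x i) ∈ LinearMap.ker S.form := by
    rcases i with i | j
    · fin_cases i
      exacts [absurd rfl hi0, absurd rfl hi1, by simp [x]]
    · simp [x]
  have hrel (z) (hz : z ∈ heisenbergPlusAbelianRelators K k) : lift K x z = 0 := by
    rcases hz with rfl | ⟨i, j, hij, hji, rfl⟩
    · simp [x, S.lie_eq]
    rw [LieHom.map_lie, lift_of_apply, lift_of_apply, S.lie_eq_zero_iff]
    by_cases hi : i ≠ .inl 0 ∧ i ≠ .inl 1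
    · rw [LinearMap.mem_ker.1 (hker i hi.1 hi.2), LinearMap.zero_apply]
    by_cases hj : j ≠ .inl 0 ∧ j ≠ .inl 1
    · exact apply_eq_zero_of_right_mem_ker S.form_isAlt (hker j hj.1 hj.2) _
    obtain rfl : i = j := by grind
    exact S.form_isAlt _
  exact (isMultiplicationTable_heisenbergPlusAbelianRelators k).nonempty_equiv
    (S.lift_surjective hx) hrel (by simpa [add_comm] using hL)

variable [FiniteDimensional K V] [FiniteDimensional K W]

theorem nonempty_equiv_heisenbergPlusAbelian (h0 : S.form ≠ 0) {v w : V}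
    (hspan : Submodule.span K {v, w} ⊔ LinearMap.ker S.form = ⊤) :
    Nonempty (L ≃ₗ⁅K⁆ heisenbergPlusAbelian K (finrank K L - 3)) := by
  have hW : finrank K W = 1 := by
    have htop : Submodule.span K {S.form v w} = ⊤ := by
      rw [← top_le_iff, ← S.span_form, Submodule.span_le]
      rintro _ ⟨a, b, rfl⟩
      exact apply_mem_span_of_span_pair_sup_ker_eq_top S.form_isAlt hspan a b
    rw [← finrank_top K W, ← htop, finrank_span_singleton
      (apply_ne_zero_of_span_pair_sup_ker_eq_top S.form_isAlt h0 hspan)]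
  have hker := finrank_ker_add_two_of_span_pair_sup_ker_eq_top S.form_isAlt h0 hspan
  have hL := S.finrank_eq
  exact S.nonempty_equiv_heisenbergPlusAbelian_of_basis hspan
    (finBasisOfFinrankEq K _ (by omega)) (by omega)

theorem exists_span_pair_sup_ker_eq_top_or_nonempty_equiv (h0 : S.form ≠ 0)
    (hV : finrank K V ≤ 3) :
    (∃ v w, Submodule.span K {v, w} ⊔ LinearMap.ker S.form = ⊤) ∨
      Nonempty (L ≃ₗ⁅K⁆ lieL58 K) ∨ Nonempty (L ≃ₗ⁅K⁆ lieL626 K) := by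
  have hω := S.form_isAlt
  obtain ⟨v, w, h⟩ := exists_apply_ne_zero h0
  have hvw := finrank_span_pair_of_apply_ne_zero hω h
  have hL := S.finrank_eq
  by_cases hV2 : finrank K V = 2
  · have htop := Submodule.eq_top_of_finrank_eq (hvw.trans hV2.symm)
    exact .inl ⟨v, w, by rw [htop, top_sup_eq]⟩
  have hV3 : finrank K V = 3 := by
    have := Submodule.finrank_le (Submodule.span K {v, w})
    omega
  obtain hW | hW | hW : finrank K W ≤ 1 ∨ finrank K W = 2 ∨ 3 ≤ finrank K W := by omega
  · have htop : Submodule.span K {S.form v w} = ⊤ := by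
      refine Submodule.eq_top_of_finrank_eq ((Submodule.finrank_le _).antisymm ?_)
      rwa [finrank_span_singleton h]
    refine .inl ⟨v, w, span_pair_sup_ker_eq_top_of_finrank_le_three hω h (fun x y => ?_) hV⟩
    exact htop ▸ Submodule.mem_top
  · obtain ⟨a, b, hab, hform⟩ := exists_linearIndependent_pair_apply_eq_zero hω hV3 hW
    obtain ⟨u, hu⟩ := exists_span_insert_pair_eq_top hV (finrank_span_pair hab)
    exact .inr (.inl (S.nonempty_equiv_lieL58 hu hform (by omega)))
  · obtain ⟨u, hu⟩ := exists_span_insert_pair_eq_top hV hvw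
    exact .inr (.inr (S.nonempty_equiv_lieL626 hu (by omega)))

theorem finrank_jacobiPairings_form_eq_iff (h0 : S.form ≠ 0) :
    finrank K (jacobiPairings S.form) + finrank K V = finrank K V * finrank K W + 2 ↔
      Nonempty (L ≃ₗ⁅K⁆ heisenbergPlusAbelian K (finrank K L - 3)) ∨
        Nonempty (L ≃ₗ⁅K⁆ lieL58 K) ∨ Nonempty (L ≃ₗ⁅K⁆ lieL626 K) := by
  rw [finrank_jacobiPairings_eq_iff S.form_isAlt h0]
  constructor
  · intro h
    have h' := h.elim (S.exists_span_pair_sup_ker_eq_top_or_nonempty_equiv h0) .inl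
    exact h'.imp_left fun ⟨_, _, hspan⟩ => S.nonempty_equiv_heisenbergPlusAbelian h0 hspan
  · rintro (⟨⟨E⟩⟩ | ⟨⟨E⟩⟩ | ⟨⟨E⟩⟩)
    · exact .inr (S.exists_span_pair_sup_ker_eq_top_of_equiv_heisenbergPlusAbelian E)
    · exact .inl (S.finrank_le_three_of_equiv_lieL58 E)
    · exact .inl (S.finrank_le_three_of_equiv_lieL626 E)

end ClassTwoSplitting

end Models

/-- an `n`-dimensional nilpotent Lie algebra of class two with
`dim L² = m` satisfies `dim M(L) = (1/2)(n+m−2)(n−m−1) + 1` iff `L` is isomorphic to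
`H(1) ⊕ A(n−3)`, `L_{5,8}` or `L_{6,26}`. -/
theorem schur_multiplier_max_class_two (K L : Type) [Field K] [LieRing L]
    [LieAlgebra K L] [FiniteDimensional K L] (n m : ℕ)
    (hn : Module.finrank K L = n) (hm : lieDerivedDim K L = m)
    (hc : lieNilpotencyClass K L 2) :
    (∀ (X : Type) (π : FreeLieAlgebra K X →ₗ⁅K⁆ L), Function.Surjective π →
        (lieSchurMultiplierDim K X π : ℤ) = ((n : ℤ) + m - 2) * ((n : ℤ) - m - 1) / 2 + 1)
      ↔ (Nonempty (L ≃ₗ⁅K⁆ heisenbergPlusAbelian K (n - 3)) ∨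
          Nonempty (L ≃ₗ⁅K⁆ lieL58 K) ∨ Nonempty (L ≃ₗ⁅K⁆ lieL626 K)) := by
  subst hn hm
  obtain ⟨V, hV⟩ :=
    Submodule.exists_isCompl (LieModule.lowerCentralSeries K L L 1).toSubmodule
  let S := ClassTwoSplitting.ofIsCompl hc.1 hV.symm
  have h0 : S.form ≠ 0 := S.form_ne_zero (hc.2 1 one_lt_two)
  have hlift : Function.Surjective (FreeLieAlgebra.lift K (id : L → L)) := fun x =>
    ⟨FreeLieAlgebra.of K x, FreeLieAlgebra.lift_of_apply id x⟩
  rw [← S.finrank_jacobiPairings_form_eq_iff h0]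
  exact ⟨fun h => (S.lieSchurMultiplierDim_eq_iff hlift).1 (h L _ hlift),
    fun h X π hπ => (S.lieSchurMultiplierDim_eq_iff hπ).2 h⟩
end
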